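/- arXiv:2403.17079 — 2 statements merged into one kernel-verified Lean document; each statement's English description precedes it below -/
import Mathlib

section
/- Let (Q, m, k) be a commutative Noetherian local ring, let I ⊆ m be an ideal and set R = Q/I. Then for every finitely generated R-module M and every integer i ≥ 0 one has Σ_{p+q=i} β_p^R(M)·β_q^Q(k) ≤ Σ_{p+q=i} β_p^Q(M)·β_q^R(k). (This is Lescot's coefficient-wise inequality P_M^R(t)·P_k^Q(t) ≼ P_M^Q(t)·P_k^R(t).) -/
open CategoryTheory TensorProduct

/-- The `i`-th Betti number of a module `M` over a local ring `A`:
`β_i^A(M) = dim_k Tor_i^A(M, k)`, computed as the `k`-dimension of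
`k ⊗_A Tor_i^A(M, k)` (the two agree since `Tor_i^A(M, k)` is a `k`-vector
space, being annihilated by the maximal ideal of `A`). -/
noncomputable def bettiNumber (A : Type) [CommRing A] [IsLocalRing A]
    (M : Type) [AddCommGroup M] [Module A M] (i : ℕ) : ℕ :=
  Module.finrank (IsLocalRing.ResidueField A)
    (IsLocalRing.ResidueField A ⊗[A]
      (((Tor (ModuleCat A) i).obj (ModuleCat.of A M)).obj
        (ModuleCat.of A (IsLocalRing.ResidueField A))))

/-!
Let `F → M` and `X → k_Q` be minimal free resolutions over `R` and over `Q`, and let `T` be the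
total complex of `F ⊗[Q] X`. It is a complex of free `R`-modules whose rank in degree `i` is the
left-hand side of the inequality, and it is again minimal, so `k_R ⊗[R] T` has zero differentials
and its homology has length `rank T_i`.

A resolution `G` of `k_R` bounds this homology: splitting `G` into short exact sequences of
syzygies and tensoring them with the flat complex `T`, the long exact sequences give
`length H_i(k_R ⊗[R] T) ≤ ∑_{p + q = i} rank G_p * length H_q(T)`.

Finally `H_q(T) → H_q(M ⊗[Q] X) = Tor_q^Q(M, k_Q)` is injective because the rows of `F ⊗[Q] X` are
resolutions of the rows of `M ⊗[Q] X`.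
-/

open Finset.HasAntidiagonal

universe u v

section Length

variable {Q R : Type*} [CommRing Q] [CommRing R] [Algebra Q R]

lemma length_le_add_of_exact {U V W : Type*} [AddCommGroup U] [Module R U] [AddCommGroup V]
    [Module R V] [AddCommGroup W] [Module R W] {f : U →ₗ[R] V} {g : V →ₗ[R] W}
    (h : Function.Exact f g) :
    Module.length R V ≤ Module.length R U + Module.length R W := by
  rw [Module.length_eq_add_of_exact (LinearMap.ker g).subtype g.rangeRestrict
    (Submodule.injective_subtype _) g.surjective_rangeRestrict
    (by rw [LinearMap.exact_iff, LinearMap.ker_rangeRestrict, Submodule.range_subtype]),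
    h.linearMap_ker_eq]
  exact add_le_add (Module.length_le_of_surjective _ f.surjective_rangeRestrict)
    (Module.length_le_of_injective _ (Submodule.injective_subtype _))

lemma length_le_length_of_isScalarTower (V : Type*) [AddCommGroup V] [Module R V] [Module Q V]
    [IsScalarTower Q R V] : Module.length R V ≤ Module.length Q V := by
  rw [← Module.length_top]
  exact (Submodule.length_le_length_restrictScalars Q (⊤ : Submodule R V)).trans_eq
    ((Submodule.topEquiv (R := R) (M := V)).restrictScalars Q).length_eq

lemma length_quotient_le_of_forall_mem {V W : Type*} [AddCommGroup V] [Module R V] [Module Q V]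
    [IsScalarTower Q R V] [AddCommGroup W] [Module Q W] (B : Submodule R V) (g : V →ₗ[Q] W)
    (h : ∀ v, g v = 0 → v ∈ B) : Module.length R (V ⧸ B) ≤ Module.length Q W :=
  calc
    Module.length R (V ⧸ B) ≤ Module.length Q (V ⧸ B) := length_le_length_of_isScalarTower _
    _ = Module.length Q (V ⧸ B.restrictScalars Q) :=
      (Submodule.Quotient.restrictScalarsEquiv Q B).symm.length_eq
    _ ≤ Module.length Q (V ⧸ LinearMap.ker g) :=
      Module.length_le_of_surjective _ (Submodule.factor_surjective (H := h))
    _ ≤ Module.length Q W :=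
      Module.length_le_of_injective _ <|
        LinearMap.ker_eq_bot.1 (Submodule.ker_liftQ_eq_bot _ g le_rfl le_rfl)

variable [IsLocalRing R]

lemma length_eq_finrank_residueField (V : Type*) [AddCommGroup V] [Module R V]
    [Module (IsLocalRing.ResidueField R) V] [IsScalarTower R (IsLocalRing.ResidueField R) V]
    [Module.Finite (IsLocalRing.ResidueField R) V] :
    Module.length R V = Module.finrank (IsLocalRing.ResidueField R) V := by
  rw [Module.length_eq_of_surjective (R := IsLocalRing.ResidueField R)
    IsLocalRing.residue_surjective, Module.length_eq_finrank]

lemma finrank_residueField_tensor_eq_length (V : Type*) [AddCommGroup V] [Module R V]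
    [Module.Finite R V] (hV : ∀ r ∈ IsLocalRing.maximalIdeal R, ∀ v : V, r • v = 0) :
    (Module.finrank (IsLocalRing.ResidueField R) (IsLocalRing.ResidueField R ⊗[R] V) : ℕ∞) =
      Module.length R V := by
  have h : IsLocalRing.maximalIdeal R • (⊤ : Submodule R V) = ⊥ :=
    eq_bot_iff.2 (Submodule.smul_le.2 fun r hr v _ => hV r hr v)
  rw [← length_eq_finrank_residueField]
  exact ((quotTensorEquivQuotSMul V _).trans (Submodule.quotEquivOfEqBot _ h)).length_eq

end Length

section TensorComplex

open MonoidalCategory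

variable {A : Type u} [CommRing A] (K : ChainComplex (ModuleCat.{u} A) ℕ)

/-- The functor `L ↦ L ⊗ K`. -/
noncomputable def tensorComplex : ModuleCat.{u} A ⥤ ChainComplex (ModuleCat.{u} A) ℕ where
  obj L := (((tensoringLeft _).obj L).mapHomologicalComplex _).obj K
  map g := (NatTrans.mapHomologicalComplex ((tensoringLeft _).map g) _).app K

instance : (tensorComplex K).Additive where
  map_add := by
    intros
    ext n : 1
    exact MonoidalPreadditive.add_whiskerRight _ _

/-- Tensoring with the ground ring does not change a complex. -/
noncomputable def tensorComplexUnitIso : (tensorComplex K).obj (𝟙_ _) ≅ K :=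
  HomologicalComplex.Hom.isoOfComponents (fun n => λ_ (K.X n))
    fun i j _ => (leftUnitor_naturality (K.d i j)).symm

lemma tensorComplex_map_shortExact [∀ n, Module.Flat A (K.X n)]
    {S : ShortComplex (ModuleCat.{u} A)} (hS : S.ShortExact) :
    (S.map (tensorComplex K)).ShortExact := by
  refine HomologicalComplex.shortExact_of_degreewise_shortExact _ fun n => ?_
  have hg : Function.Surjective S.g.hom := hS.moduleCat_surjective_g
  exact
    { exact := (ShortComplex.ShortExact.moduleCat_exact_iff_function_exact _).2 <|
        rTensor_exact (K.X n)
          ((ShortComplex.ShortExact.moduleCat_exact_iff_function_exact _).1 hS.exact) hg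
      mono_f := (ModuleCat.mono_iff_injective _).2 <|
        Module.Flat.rTensor_preserves_injective_linearMap (M := K.X n) S.f.hom
          hS.moduleCat_injective_f
      epi_g := (ModuleCat.epi_iff_surjective _).2 (LinearMap.rTensor_surjective (K.X n) hg) }

lemma length_obj_pi (F : ModuleCat.{u} A ⥤ ModuleCat.{u} A) [F.Additive] (m : ℕ) :
    Module.length A (F.obj (ModuleCat.of A (Fin m → A))) =
      m * Module.length A (F.obj (ModuleCat.of A A)) := by
  let e : F.obj (ModuleCat.of A (Fin m → A)) ≅
      ModuleCat.of A (Fin m → F.obj (ModuleCat.of A A)) :=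
    F.mapIso (ModuleCat.biproductIsoPi fun _ : Fin m => ModuleCat.of A A).symm ≪≫
      F.mapBiproduct _ ≪≫ ModuleCat.biproductIsoPi _
  simpa using e.toLinearEquiv.length_eq

lemma length_homology_tensorComplex_pi (m n : ℕ) :
    Module.length A (((tensorComplex K).obj (ModuleCat.of A (Fin m → A))).homology n) =
      m * Module.length A (K.homology n) := by
  let H := HomologicalComplex.homologyFunctor (ModuleCat.{u} A) (ComplexShape.down ℕ) n
  exact (length_obj_pi (tensorComplex K ⋙ H) m).trans <|
    congrArg _ (H.mapIso (tensorComplexUnitIso K)).toLinearEquiv.length_eq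

variable [∀ n, Module.Flat A (K.X n)] {S : ShortComplex (ModuleCat.{u} A)} (hS : S.ShortExact)

include hS in
lemma length_homology_tensorComplex_succ_le (n : ℕ) :
    Module.length A (((tensorComplex K).obj S.X₃).homology (n + 1)) ≤
      Module.length A (((tensorComplex K).obj S.X₂).homology (n + 1)) +
        Module.length A (((tensorComplex K).obj S.X₁).homology n) :=
  length_le_add_of_exact <| (ShortComplex.ShortExact.moduleCat_exact_iff_function_exact _).1 <|
    (tensorComplex_map_shortExact K hS).homology_exact₃ (n + 1) n rfl

include hS in
lemma length_homology_tensorComplex_zero_le :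
    Module.length A (((tensorComplex K).obj S.X₃).homology 0) ≤
      Module.length A (((tensorComplex K).obj S.X₂).homology 0) := by
  have : Epi ((tensorComplex K).map S.g) := (tensorComplex_map_shortExact K hS).epi_g
  have := HomologicalComplex.epi_homologyMap_of_epi_of_not_rel ((tensorComplex K).map S.g) 0
    (by simp)
  exact Module.length_le_of_surjective _ ((ModuleCat.epi_iff_surjective _).1 this)

end TensorComplex

section FiniteFreeResolution

/-- A resolution of the module `N` by free modules of finite rank, with chosen bases; `ε` is the
augmentation onto `N`. -/
structure FiniteFreeResolution (A : Type*) [CommRing A] (N : Type*) [AddCommGroup N]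
    [Module A N] where
  rank : ℕ → ℕ
  d : ∀ n, (Fin (rank (n + 1)) → A) →ₗ[A] (Fin (rank n) → A)
  ε : (Fin (rank 0) → A) →ₗ[A] N
  surjective_ε : Function.Surjective ε
  exact_d_ε : Function.Exact (d 0) ε
  exact_d_d : ∀ n, Function.Exact (d (n + 1)) (d n)

namespace FiniteFreeResolution

variable {A : Type u} [CommRing A] {N : Type u} [AddCommGroup N] [Module A N]
  (X : FiniteFreeResolution A N)

/-- The resolution as a chain complex, without its augmentation. -/
noncomputable def complex : ChainComplex (ModuleCat.{u} A) ℕ :=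
  ChainComplex.of (fun n => ModuleCat.of A (Fin (X.rank n) → A)) (fun n => ModuleCat.ofHom (X.d n))
    fun n => ModuleCat.hom_ext (X.exact_d_d n).linearMap_comp_eq_zero

lemma complex_d (n : ℕ) : X.complex.d (n + 1) n = ModuleCat.ofHom (X.d n) :=
  ChainComplex.of_d (fun n => ModuleCat.of A (Fin (X.rank n) → A))
    (fun n => ModuleCat.ofHom (X.d n)) n

lemma complex_d_comp_ε : X.complex.d 1 0 ≫ ModuleCat.ofHom X.ε = 0 := by
  rw [complex_d]
  exact ModuleCat.hom_ext X.exact_d_ε.linearMap_comp_eq_zero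

lemma exactAt_complex (n : ℕ) : X.complex.ExactAt (n + 1) := by
  rw [HomologicalComplex.exactAt_iff' _ (n + 2) (n + 1) n (by simp) (by simp),
    ShortComplex.ShortExact.moduleCat_exact_iff_function_exact]
  change Function.Exact (X.complex.d (n + 1 + 1) (n + 1)) (X.complex.d (n + 1) n)
  rw [complex_d, complex_d]
  exact X.exact_d_d n

lemma quasiIsoAt_zero :
    QuasiIsoAt ((ChainComplex.toSingle₀Equiv X.complex (ModuleCat.of A N)).symm
      ⟨ModuleCat.ofHom X.ε, X.complex_d_comp_ε⟩) 0 := by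
  rw [ChainComplex.quasiIsoAt₀_iff, ShortComplex.quasiIso_iff_of_zeros' _ rfl rfl rfl]
  constructor
  · rw [ShortComplex.ShortExact.moduleCat_exact_iff_function_exact]
    change Function.Exact (X.complex.d (0 + 1) 0) X.ε
    rw [complex_d]
    exact X.exact_d_ε
  · exact (ModuleCat.epi_iff_surjective _).2 X.surjective_ε

/-- The resolution as a projective resolution in the sense of Mathlib, for computing `Tor`. -/
noncomputable def toProjectiveResolution : ProjectiveResolution (ModuleCat.of A N) where
  complex := X.complex
  projective n := (IsProjective.iff_projective (Fin (X.rank n) → A)).1 inferInstance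
  π := (ChainComplex.toSingle₀Equiv _ _).symm ⟨ModuleCat.ofHom X.ε, X.complex_d_comp_ε⟩
  quasiIso := ⟨fun n => by
    cases n with
    | zero => exact X.quasiIsoAt_zero
    | succ n =>
      rw [quasiIsoAt_iff_exactAt']
      · exact X.exactAt_complex n
      · exact ChainComplex.exactAt_succ_single_obj _ n⟩

/-- The resolution of the first syzygy of `N` obtained by dropping degree zero. -/
def syzygy : FiniteFreeResolution A (LinearMap.ker X.ε) where
  rank n := X.rank (n + 1)
  d n := X.d (n + 1)
  ε := (X.d 0).codRestrict _ X.exact_d_ε.apply_apply_eq_zero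
  surjective_ε := fun ⟨x, hx⟩ =>
    let ⟨y, hy⟩ := (X.exact_d_ε x).1 hx
    ⟨y, Subtype.ext hy⟩
  exact_d_ε x := Subtype.ext_iff.trans (X.exact_d_d 0 x)
  exact_d_d n := X.exact_d_d (n + 1)

lemma length_homology_complex_succ (n : ℕ) :
    Module.length A (X.complex.homology (n + 1)) = 0 := by
  rw [Module.length_eq_zero_iff]
  exact ModuleCat.subsingleton_of_isZero (X.exactAt_complex n).isZero_homology

lemma length_homology_complex_zero : Module.length A (X.complex.homology 0) = Module.length A N :=
  have := X.quasiIsoAt_zero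
  (isoOfQuasiIsoAt ((ChainComplex.toSingle₀Equiv X.complex (ModuleCat.of A N)).symm
    ⟨ModuleCat.ofHom X.ε, X.complex_d_comp_ε⟩) 0 ≪≫
      HomologicalComplex.singleObjHomologySelfIso _ _ _).toLinearEquiv.length_eq

instance (n : ℕ) : Module.Free A (X.complex.X n) :=
  inferInstanceAs (Module.Free A (Fin (X.rank n) → A))

instance (n : ℕ) : Module.Finite A (X.complex.X n) :=
  inferInstanceAs (Module.Finite A (Fin (X.rank n) → A))

lemma finrank_complex [Nontrivial A] (n : ℕ) : Module.finrank A (X.complex.X n) = X.rank n :=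
  Module.finrank_fin_fun A

end FiniteFreeResolution

/-- Peeling off one syzygy of `L` at a time, the long exact homology sequences of
`0 → ker ε ⊗ K → F₀ ⊗ K → L ⊗ K → 0` add up to this bound. -/
theorem length_homology_tensorComplex_le {A : Type u} [CommRing A]
    (K : ChainComplex (ModuleCat.{u} A) ℕ) [∀ n, Module.Flat A (K.X n)] (i : ℕ) {L : Type u}
    [AddCommGroup L] [Module A L] (G : FiniteFreeResolution A L) :
    Module.length A (((tensorComplex K).obj (ModuleCat.of A L)).homology i) ≤
      ∑ p ∈ antidiagonal i, G.rank p.1 * Module.length A (K.homology p.2) := by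
  have hS {L : Type u} [AddCommGroup L] [Module A L] (G : FiniteFreeResolution A L) :=
    LinearMap.shortExact_shortComplexKer G.surjective_ε
  induction i generalizing L with
  | zero =>
    simpa only [Finset.Nat.antidiagonal_zero, Finset.sum_singleton,
      ← length_homology_tensorComplex_pi] using length_homology_tensorComplex_zero_le K (hS G)
  | succ i ih =>
    rw [Finset.Nat.sum_antidiagonal_succ, ← length_homology_tensorComplex_pi]
    exact (length_homology_tensorComplex_succ_le K (hS G) i).trans (by gcongr; exact ih G.syzygy)

end FiniteFreeResolution

section Minimality

open IsLocalRing

lemma ker_fintypeLinearCombination_le {A : Type*} [CommRing A] [IsLocalRing A] {N : Type*}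
    [AddCommGroup N] [Module A N] {ι : Type*} [Fintype ι] {v : ι → N}
    (hv : LinearIndependent (ResidueField A)
      fun i => TensorProduct.mk A (ResidueField A) N 1 (v i)) :
    LinearMap.ker (Fintype.linearCombination A v) ≤ maximalIdeal A • ⊤ := by
  classical
  intro x hx
  have hx' : ∑ i, residue A (x i) • TensorProduct.mk A (ResidueField A) N 1 (v i) = 0 := by
    calc
      _ = TensorProduct.mk A (ResidueField A) N 1 (Fintype.linearCombination A v x) := by
        simp only [Fintype.linearCombination_apply, map_sum, map_smul, ← algebraMap_smul
          (ResidueField A) (_ : A), ResidueField.algebraMap_eq]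
      _ = 0 := by rw [LinearMap.mem_ker.1 hx, map_zero]
  rw [pi_eq_sum_univ' x]
  exact Submodule.sum_mem _ fun i _ => Submodule.smul_mem_smul
    ((residue_eq_zero_iff _).1 (Fintype.linearIndependent_iff.1 hv _ hx' i)) Submodule.mem_top

variable {A : Type u} [CommRing A] [IsLocalRing A]

lemma exists_surjective_ker_le_smul_top (N : Type*) [AddCommGroup N] [Module A N]
    [Module.Finite A N] : ∃ (n : ℕ) (f : (Fin n → A) →ₗ[A] N), Function.Surjective f ∧
      LinearMap.ker f ≤ maximalIdeal A • ⊤ := by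
  let B := Module.finBasis (ResidueField A) (ResidueField A ⊗[A] N)
  choose v hv using fun i => TensorProduct.mk_surjective A N _ residue_surjective (B i)
  refine ⟨_, Fintype.linearCombination A v, ?_, ker_fintypeLinearCombination_le ?_⟩
  · rw [← LinearMap.range_eq_top, Fintype.range_linearCombination]
    exact span_eq_top_of_tmul_eq_basis v B hv
  · simpa only [hv] using B.linearIndependent

/-- A chain complex over a local ring is minimal if its differentials vanish modulo the maximal
ideal. -/
def IsMinimalComplex (K : ChainComplex (ModuleCat.{u} A) ℕ) : Prop :=
  ∀ n, LinearMap.range (K.d (n + 1) n).hom ≤ maximalIdeal A • ⊤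

lemma exists_range_eq_ker_le_smul_top [IsNoetherianRing A] {m : ℕ} (N : Submodule A (Fin m → A)) :
    ∃ (n : ℕ) (f : (Fin n → A) →ₗ[A] (Fin m → A)), LinearMap.range f = N ∧
      LinearMap.ker f ≤ maximalIdeal A • ⊤ := by
  obtain ⟨n, f, hf, hker⟩ := exists_surjective_ker_le_smul_top (A := A) N
  refine ⟨n, N.subtype ∘ₗ f, ?_, ?_⟩
  · rw [LinearMap.range_comp, LinearMap.range_eq_top.2 hf, Submodule.map_top,
      Submodule.range_subtype]
  · rwa [LinearMap.ker_comp, Submodule.ker_subtype]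

lemma exists_isMinimalComplex_complex [IsNoetherianRing A] (N : Type u) [AddCommGroup N]
    [Module A N] [Module.Finite A N] :
    ∃ X : FiniteFreeResolution A N, IsMinimalComplex X.complex := by
  obtain ⟨b, ε, hε, hker⟩ := exists_surjective_ker_le_smul_top (A := A) N
  choose rk f hrange hf using
    fun s : Σ m, Submodule A (Fin m → A) => exists_range_eq_ker_le_smul_top s.2
  let Z : ℕ → Σ m, Submodule A (Fin m → A) :=
    fun n => n.rec ⟨b, LinearMap.ker ε⟩ fun _ s => ⟨rk s, LinearMap.ker (f s)⟩
  have hZ : ∀ n, (Z n).2 ≤ maximalIdeal A • ⊤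
    | 0 => hker
    | n + 1 => hf (Z n)
  let X : FiniteFreeResolution A N :=
    { rank n := (Z n).1
      d n := f (Z n)
      ε := ε
      surjective_ε := hε
      exact_d_ε := LinearMap.exact_iff.2 (hrange (Z 0)).symm
      exact_d_d n := LinearMap.exact_iff.2 (hrange (Z (n + 1))).symm }
  refine ⟨X, fun n => ?_⟩
  rw [X.complex_d]
  exact (hrange (Z n)).le.trans (hZ n)

end Minimality

section TensorRange

variable {Q R : Type*} [CommRing Q] [CommRing R] [Algebra Q R] {V V' W W' : Type*}
  [AddCommGroup V] [Module R V] [Module Q V] [IsScalarTower Q R V]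
  [AddCommGroup V'] [Module R V'] [Module Q V'] [IsScalarTower Q R V']
  [AddCommGroup W] [Module Q W] [AddCommGroup W'] [Module Q W']

lemma range_rTensor_le_smul_top {J : Ideal R} {f : V →ₗ[R] V'}
    (hf : LinearMap.range f ≤ J • ⊤) :
    LinearMap.range (AlgebraTensorModule.rTensor Q W f) ≤ J • ⊤ := by
  rintro _ ⟨x, rfl⟩
  induction x using TensorProduct.induction_on with
  | zero => rw [map_zero]; exact zero_mem _
  | add x y hx hy => rw [map_add]; exact add_mem hx hy
  | tmul v w =>
    exact Submodule.smul_top_le_comap_smul_top J ((AlgebraTensorModule.mk Q R V' W).flip w)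
      (hf ⟨v, rfl⟩)

lemma range_lTensor_le_smul_top {J : Ideal Q} {f : W →ₗ[Q] W'}
    (hf : LinearMap.range f ≤ J • ⊤) :
    LinearMap.range (AlgebraTensorModule.lTensor R V f) ≤ J.map (algebraMap Q R) • ⊤ := by
  rintro _ ⟨x, rfl⟩
  induction x using TensorProduct.induction_on with
  | zero => rw [map_zero]; exact zero_mem _
  | add x y hx hy => rw [map_add]; exact add_mem hx hy
  | tmul v w =>
    have h : v ⊗ₜ[Q] f w ∈ J • (⊤ : Submodule R (V ⊗[Q] W')).restrictScalars Q :=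
      Submodule.smul_top_le_comap_smul_top J (TensorProduct.mk Q V W' v) (hf ⟨w, rfl⟩)
    rwa [← Ideal.smul_restrictScalars] at h

lemma rTensor_lTensor_comm (f : V →ₗ[R] V') (g : W →ₗ[Q] W') (x : V ⊗[Q] W) :
    AlgebraTensorModule.rTensor Q W' f (AlgebraTensorModule.lTensor R V g x) =
      AlgebraTensorModule.lTensor R V' g (AlgebraTensorModule.rTensor Q W f x) :=
  LinearMap.congr_fun ((LinearMap.rTensor_comp_lTensor _ (f.restrictScalars Q) g).trans
    (LinearMap.lTensor_comp_rTensor _ _ _).symm) x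

lemma lTensor_residueField_eq_zero [IsLocalRing Q] {f : W →ₗ[Q] W'}
    (hf : LinearMap.range f ≤ IsLocalRing.maximalIdeal Q • ⊤) :
    f.lTensor (IsLocalRing.ResidueField Q) = 0 := by
  have h := range_lTensor_le_smul_top (R := IsLocalRing.ResidueField Q)
    (V := IsLocalRing.ResidueField Q) hf
  rw [IsLocalRing.ResidueField.algebraMap_eq, (Ideal.map_eq_bot_iff_le_ker _).2
    IsLocalRing.ker_residue.ge, Submodule.bot_smul] at h
  exact LinearMap.ext fun x => h ⟨x, rfl⟩

end TensorRange

section ZeroDifferentials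

variable {A : Type u} [CommRing A]

lemma length_homology_of_d_eq_zero (K : ChainComplex (ModuleCat.{u} A) ℕ)
    (hK : ∀ n, K.d (n + 1) n = 0) (n : ℕ) :
    Module.length A (K.homology n) = Module.length A (K.X n) := by
  have hd (i j : ℕ) : K.d i j = 0 := by
    by_cases h : j + 1 = i
    · rw [← h, hK]
    · exact K.shape i j h
  exact (ShortComplex.LeftHomologyData.ofZeros (K.sc n) (hd _ _)
    (hd _ _)).homologyIso.toLinearEquiv.length_eq

open IsLocalRing

lemma length_homology_residueField_tensorComplex [IsLocalRing A]
    {K : ChainComplex (ModuleCat.{u} A) ℕ} (hK : IsMinimalComplex K)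
    (n : ℕ) [Module.Free A (K.X n)] [Module.Finite A (K.X n)] :
    Module.length A (((tensorComplex K).obj (ModuleCat.of A (ResidueField A))).homology n) =
      Module.finrank A (K.X n) := by
  rw [length_homology_of_d_eq_zero _ fun n => ModuleCat.hom_ext
    (lTensor_residueField_eq_zero (hK n))]
  change Module.length A (ResidueField A ⊗[A] K.X n) = _
  rw [length_eq_finrank_residueField, Module.finrank_baseChange]

end ZeroDifferentials

section BettiNumbers

lemma homologyMap_smul_id {A C : Type*} [Semiring A] [Category* C] [Preadditive C] [Linear A C]
    [CategoryWithHomology C] {ι : Type*} {c : ComplexShape ι} (K : HomologicalComplex C c) (i : ι)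
    (r : A) : HomologicalComplex.homologyMap (r • 𝟙 K) i = r • 𝟙 (K.homology i) := by
  change ShortComplex.homologyMap (r • 𝟙 (K.sc i)) = _
  rw [ShortComplex.homologyMap_smul, ShortComplex.homologyMap_id]
  rfl

lemma leftDerived_map_smul_id {A C D : Type*} [Ring A] [Category* C] [Abelian C]
    [HasProjectiveResolutions C] [Linear A C] [Category* D] [Abelian D] [Linear A D] (F : C ⥤ D)
    [F.Additive] [F.Linear A] (n : ℕ) (X : C) (r : A) :
    (F.leftDerived n).map (r • 𝟙 X) = r • 𝟙 ((F.leftDerived n).obj X) := by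
  let P := projectiveResolution X
  have comm : (r • 𝟙 P.complex).f 0 ≫ P.π.f 0 = P.π.f 0 ≫ (r • 𝟙 X) := by
    rw [HomologicalComplex.smul_f_apply, HomologicalComplex.id_f, Linear.smul_comp,
      Category.id_comp]
    exact ((Linear.comp_smul _ _ _ _ _ _).trans (congrArg _ (Category.comp_id _))).symm
  have hF : (F.mapHomologicalComplex _).map (r • 𝟙 P.complex) = r • 𝟙 _ := by
    rw [Functor.map_smul, CategoryTheory.Functor.map_id]
  have h := P.isoLeftDerivedObj_hom_naturality (r • 𝟙 X) P (r • 𝟙 P.complex) comm F n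
  rw [Functor.comp_map, hF, HomologicalComplex.homologyFunctor_map, homologyMap_smul_id] at h
  rw [← cancel_mono (P.isoLeftDerivedObj F n).hom, h, Linear.smul_comp, Category.id_comp]
  exact (Linear.comp_smul _ _ _ _ _ _).trans (congrArg _ (Category.comp_id _))

section

variable {A : Type u} [CommRing A]

lemma smul_tor_eq_zero {n : ℕ} {M N : ModuleCat.{u} A} {r : A} (hr : ∀ v : N, r • v = 0)
    (x : ((Tor (ModuleCat.{u} A) n).obj M).obj N) : r • x = 0 := by
  have h : r • 𝟙 N = (0 : A) • 𝟙 N := by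
    rw [zero_smul]
    exact ModuleCat.hom_ext (LinearMap.ext hr)
  let F := (MonoidalCategory.tensoringLeft (ModuleCat.{u} A)).obj M
  have h' := congrArg (F.leftDerived n).map h
  rw [leftDerived_map_smul_id, leftDerived_map_smul_id, zero_smul] at h'
  exact ConcreteCategory.congr_hom h' x

lemma finite_homology [IsNoetherianRing A] (K : ChainComplex (ModuleCat.{u} A) ℕ) (n : ℕ)
    [Module.Finite A (K.X n)] : Module.Finite A (K.homology n) :=
  have := Module.Finite.of_injective (K.iCycles n).hom
    ((ModuleCat.mono_iff_injective _).1 inferInstance)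
  Module.Finite.of_surjective (K.homologyπ n).hom ((ModuleCat.epi_iff_surjective _).1 inferInstance)

end

open IsLocalRing

variable {A : Type} [CommRing A] [IsLocalRing A] [IsNoetherianRing A] (M : Type) [AddCommGroup M]
  [Module A M] [Module.Finite A M] (P : FiniteFreeResolution A (ResidueField A))

lemma bettiNumber_eq_length_homology (i : ℕ) :
    (bettiNumber A M i : ℕ∞) =
      Module.length A (((tensorComplex P.complex).obj (ModuleCat.of A M)).homology i) := by
  let e : ((Tor (ModuleCat A) i).obj (ModuleCat.of A M)).obj (ModuleCat.of A (ResidueField A)) ≃ₗ[A]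
      ((tensorComplex P.complex).obj (ModuleCat.of A M)).homology i :=
    (P.toProjectiveResolution.isoLeftDerivedObj
      ((MonoidalCategory.tensoringLeft _).obj (ModuleCat.of A M)) i).toLinearEquiv
  have : Module.Finite A (((tensorComplex P.complex).obj (ModuleCat.of A M)).X i) :=
    inferInstanceAs (Module.Finite A (M ⊗[A] P.complex.X i))
  have := finite_homology ((tensorComplex P.complex).obj (ModuleCat.of A M)) i
  have := Module.Finite.equiv e.symm
  rw [← e.length_eq, bettiNumber, finrank_residueField_tensor_eq_length]
  refine fun r hr => smul_tor_eq_zero fun v => ?_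
  rw [← algebraMap_smul (ResidueField A) r v, ResidueField.algebraMap_eq,
    (residue_eq_zero_iff r).2 hr, zero_smul]

variable {P} in
lemma bettiNumber_residueField_eq_rank (hP : IsMinimalComplex P.complex) (i : ℕ) :
    bettiNumber A (ResidueField A) i = P.rank i := by
  rw [← ENat.natCast_inj, bettiNumber_eq_length_homology _ P,
    length_homology_residueField_tensorComplex hP, P.finrank_complex]

variable {M} in
lemma bettiNumber_le_rank (F : FiniteFreeResolution A M) (i : ℕ) :
    bettiNumber A M i ≤ F.rank i := by
  obtain ⟨P, -⟩ := exists_isMinimalComplex_complex (A := A) (ResidueField A)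
  have hk : Module.length A (ResidueField A) = 1 := by
    rw [length_eq_finrank_residueField, Module.finrank_self, Nat.cast_one]
  have h := length_homology_tensorComplex_le P.complex i F
  rw [← bettiNumber_eq_length_homology, Finset.sum_eq_single (i, 0),
    P.length_homology_complex_zero, hk, mul_one] at h
  · exact_mod_cast h
  · rintro ⟨p, _ | q⟩ hp hne
    · simp_all
    · rw [P.length_homology_complex_succ, mul_zero]
  · simp

end BettiNumbers

section HomologyComparison

variable {Q R : Type*} [CommRing Q] [CommRing R] [Algebra Q R]

lemma length_homology_le_of_reflects_range {S : ShortComplex (ModuleCat.{u} R)}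
    {T : ShortComplex (ModuleCat.{v} Q)} [Module Q S.X₂] [IsScalarTower Q R S.X₂]
    (φ : S.X₂ →ₗ[Q] T.X₂) (hφ : ∀ z, S.g z = 0 → T.g (φ z) = 0)
    (hrange : ∀ z, S.g z = 0 → φ z ∈ LinearMap.range T.f.hom → z ∈ LinearMap.range S.f.hom) :
    Module.length R S.homology ≤ Module.length Q T.homology := by
  rw [S.moduleCatHomologyIso.toLinearEquiv.length_eq,
    T.moduleCatHomologyIso.toLinearEquiv.length_eq]
  let ψ : LinearMap.ker S.g.hom →ₗ[Q] LinearMap.ker T.g.hom :=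
    (φ ∘ₗ (LinearMap.ker S.g.hom).subtype.restrictScalars Q).codRestrict
      (LinearMap.ker T.g.hom) fun z => hφ z z.2
  refine length_quotient_le_of_forall_mem _ (Submodule.mkQ _ ∘ₗ ψ) fun z hz => ?_
  obtain ⟨w, hw⟩ := (Submodule.Quotient.mk_eq_zero _).1 hz
  obtain ⟨y, hy⟩ := hrange z z.2 ⟨w, congrArg Subtype.val hw⟩
  exact ⟨y, Subtype.ext hy⟩

lemma range_sc_f (K : ChainComplex (ModuleCat.{u} R) ℕ) (n : ℕ) :
    LinearMap.range (K.sc n).f.hom = LinearMap.range (K.d (n + 1) n).hom := by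
  change LinearMap.range (K.d ((ComplexShape.down ℕ).prev n) n).hom = _
  rw [ChainComplex.prev]

lemma length_homology_le_of_reflects_boundaries {K : ChainComplex (ModuleCat.{u} R) ℕ}
    {L : ChainComplex (ModuleCat.{v} Q) ℕ} (n : ℕ) [Module Q (K.X n)] [IsScalarTower Q R (K.X n)]
    (φ : K.X n →ₗ[Q] L.X n) (hφ : ∀ z, (∀ m, K.d n m z = 0) → ∀ m, L.d n m (φ z) = 0)
    (hrange : ∀ z, (∀ m, K.d n m z = 0) → φ z ∈ LinearMap.range (L.d (n + 1) n).hom →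
      z ∈ LinearMap.range (K.d (n + 1) n).hom) :
    Module.length R (K.homology n) ≤ Module.length Q (L.homology n) := by
  have hz {z : K.X n} (h : (K.sc n).g z = 0) (m : ℕ) : K.d n m z = 0 := by
    by_cases hm : (ComplexShape.down ℕ).Rel n m
    · rw [← (ComplexShape.down ℕ).next_eq' hm]
      exact h
    · rw [K.shape n m hm]
      rfl
  let : Module Q (K.sc n).X₂ := inferInstanceAs (Module Q (K.X n))
  have : IsScalarTower Q R (K.sc n).X₂ := inferInstanceAs (IsScalarTower Q R (K.X n))
  refine length_homology_le_of_reflects_range (S := K.sc n) (T := L.sc n) φ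
    (fun z h => hφ z (hz h) _) fun z h hz₀ => ?_
  rw [range_sc_f] at hz₀ ⊢
  exact hrange z (hz h) hz₀

end HomologyComparison

section DoubleComplex

/-- A first-quadrant double complex on the modules `D p q`. The horizontal and vertical
differentials `dh` and `dv` anticommute, so that their sum is a differential. -/
structure DoubleComplex (R : Type*) [CommRing R] (D : ℕ → ℕ → Type*)
    [∀ p q, AddCommGroup (D p q)] [∀ p q, Module R (D p q)] where
  dh : ∀ p q, D (p + 1) q →ₗ[R] D p q
  dv : ∀ p q, D p (q + 1) →ₗ[R] D p q
  dh_dh : ∀ p q x, dh p q (dh (p + 1) q x) = 0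
  dv_dv : ∀ p q x, dv p q (dv p (q + 1) x) = 0
  dh_dv : ∀ p q x, dh p q (dv (p + 1) q x) = -dv p q (dh p (q + 1) x)

namespace DoubleComplex

/-- The degree `n` part of the total complex of a double complex on the modules `D p q`. -/
abbrev Total (D : ℕ → ℕ → Type*) (n : ℕ) : Type _ :=
  ∀ s : antidiagonal n, D s.1.1 s.1.2

variable {R : Type u} [CommRing R] {D : ℕ → ℕ → Type u} [∀ p q, AddCommGroup (D p q)]
  [∀ p q, Module R (D p q)] (C : DoubleComplex R D)

variable (R) in
/-- The component of an element of the total complex in bidegree `(p, q)`, which is zero unless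
`p + q = n`. -/
def component {n : ℕ} (p q : ℕ) : Total D n →ₗ[R] D p q :=
  if h : p + q = n then LinearMap.proj (⟨(p, q), mem_antidiagonal.2 h⟩ : antidiagonal n) else 0

lemma component_of_ne {n p q : ℕ} (h : p + q ≠ n) (x : Total D n) :
    component R p q x = 0 := by
  rw [component, dif_neg h, LinearMap.zero_apply]

lemma component_coe {n : ℕ} (s : antidiagonal n) (x : Total D n) :
    component R s.1.1 s.1.2 x = x s := by
  rw [component, dif_pos (mem_antidiagonal.1 s.2), LinearMap.proj_apply]

lemma component_mk {n : ℕ} (y : ∀ p q, D p q) {p q : ℕ} (h : p + q = n) :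
    component R (n := n) p q (fun s => y s.1.1 s.1.2) = y p q := by
  rw [component, dif_pos h, LinearMap.proj_apply]

/-- The differential of the total complex. -/
def totalD (n : ℕ) : Total D (n + 1) →ₗ[R] Total D n :=
  LinearMap.pi fun s => C.dh s.1.1 s.1.2 ∘ₗ component R (s.1.1 + 1) s.1.2 +
    C.dv s.1.1 s.1.2 ∘ₗ component R s.1.1 (s.1.2 + 1)

lemma component_totalD {n : ℕ} (p q : ℕ) (x : Total D (n + 1)) :
    component R p q (C.totalD n x) =
      C.dh p q (component R (p + 1) q x) + C.dv p q (component R p (q + 1) x) := by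
  by_cases h : p + q = n
  · exact component_coe ⟨(p, q), mem_antidiagonal.2 h⟩ _
  · rw [component_of_ne h, component_of_ne (by lia), component_of_ne (by lia), map_zero, map_zero,
      add_zero]

lemma totalD_comp_totalD (n : ℕ) : C.totalD n ∘ₗ C.totalD (n + 1) = 0 := by
  refine LinearMap.ext fun x => funext fun s => ?_
  refine (component_coe (R := R) s _).symm.trans ?_
  rw [LinearMap.comp_apply, component_totalD, component_totalD, component_totalD, map_add, map_add,
    C.dh_dh, C.dv_dv, C.dh_dv, zero_add, add_zero, neg_add_cancel]
  rfl

/-- The total complex of a double complex. -/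
noncomputable def totalComplex : ChainComplex (ModuleCat.{u} R) ℕ :=
  ChainComplex.of (fun n => ModuleCat.of R (Total D n)) (fun n => ModuleCat.ofHom (C.totalD n))
    fun n => ModuleCat.hom_ext (C.totalD_comp_totalD n)

lemma totalComplex_d (n : ℕ) : C.totalComplex.d (n + 1) n = ModuleCat.ofHom (C.totalD n) :=
  ChainComplex.of_d (fun n => ModuleCat.of R (Total D n)) (fun n => ModuleCat.ofHom (C.totalD n)) n

lemma exists_dh_add_dv_eq (hrow : ∀ p q, Function.Exact (C.dh (p + 1) q) (C.dh p q))
    {z : ∀ p q, D p q} (hz : ∀ p q, C.dh p q (z (p + 1) q) + C.dv p q (z p (q + 1)) = 0)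
    {y₀ : ∀ q, D 0 q} (hy₀ : ∀ q, z 0 q - C.dv 0 q (y₀ (q + 1)) ∈ LinearMap.range (C.dh 0 q)) :
    ∃ y : ∀ p q, D p q, ∀ p q, C.dh p q (y (p + 1) q) + C.dv p q (y p (q + 1)) = z p q := by
  let Extends (p : ℕ) (y : ∀ q, D p q) : Prop :=
    ∀ q, z p q - C.dv p q (y (q + 1)) ∈ LinearMap.range (C.dh p q)
  have extend (p : ℕ) (y : {y // Extends p y}) : ∃ y' : {y' // Extends (p + 1) y'},
      ∀ q, C.dh p q (y'.1 q) = z p q - C.dv p q (y.1 (q + 1)) := by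
    choose y' hy' using y.2
    refine ⟨⟨y', fun q => (hrow p q _).1 ?_⟩, hy'⟩
    rw [map_sub, C.dh_dv, hy', map_sub, C.dv_dv, sub_zero, sub_neg_eq_add, hz]
  choose next hnext using extend
  let y (p : ℕ) : {y // Extends p y} := p.rec ⟨y₀, hy₀⟩ next
  exact ⟨fun p => (y p).1, fun p q => by rw [hnext p (y p) q, sub_add_cancel]⟩

lemma isMinimalComplex_totalComplex [IsLocalRing R]
    (hdh : ∀ p q, LinearMap.range (C.dh p q) ≤ IsLocalRing.maximalIdeal R • ⊤)
    (hdv : ∀ p q, LinearMap.range (C.dv p q) ≤ IsLocalRing.maximalIdeal R • ⊤) :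
    IsMinimalComplex C.totalComplex := by
  intro n
  rw [totalComplex_d]
  rintro _ ⟨x, rfl⟩
  change C.totalD n x ∈ _
  rw [← Finset.univ_sum_single (C.totalD n x)]
  refine Submodule.sum_mem _ fun s _ => Submodule.smul_top_le_comap_smul_top _
    (LinearMap.single R (fun s : antidiagonal n => D s.1.1 s.1.2) s) ?_
  exact add_mem (hdh _ _ ⟨_, rfl⟩) (hdv _ _ ⟨_, rfl⟩)

section Rank

variable [∀ p q, Module.Free R (D p q)]

instance (n : ℕ) : Module.Free R (C.totalComplex.X n) :=
  inferInstanceAs (Module.Free R (Total D n))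

variable [∀ p q, Module.Finite R (D p q)]

instance (n : ℕ) : Module.Finite R (C.totalComplex.X n) :=
  inferInstanceAs (Module.Finite R (Total D n))

lemma finrank_totalComplex [Nontrivial R] (n : ℕ) :
    Module.finrank R (C.totalComplex.X n) =
      ∑ p ∈ antidiagonal n, Module.finrank R (D p.1 p.2) :=
  (Module.finrank_pi_fintype R).trans
    (Finset.sum_coe_sort _ fun p : ℕ × ℕ => Module.finrank R (D p.1 p.2))

end Rank

section Augmentation

variable {Q : Type*} [CommRing Q] [∀ p q, Module Q (D p q)]
  {K : ChainComplex (ModuleCat.{v} Q) ℕ}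

/-- An augmentation `ε` of the column `D 0 _` to a complex `K`, possibly over a different ring,
that makes each row of the double complex a resolution of `K.X q`. -/
structure ExactAugmentation (K : ChainComplex (ModuleCat.{v} Q) ℕ) where
  ε : ∀ q, D 0 q →ₗ[Q] K.X q
  ε_dv : ∀ q x, ε q (C.dv 0 q x) = K.d (q + 1) q (ε (q + 1) x)
  surjective_ε : ∀ q, Function.Surjective (ε q)
  exact_dh_ε : ∀ q, Function.Exact (C.dh 0 q) (ε q)
  exact_dh_dh : ∀ p q, Function.Exact (C.dh (p + 1) q) (C.dh p q)

variable {C}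

lemma ExactAugmentation.mem_range_totalD (α : C.ExactAugmentation K) {n : ℕ} {z : Total D n}
    (hz : ∀ p q, C.dh p q (component R (p + 1) q z) +
      C.dv p q (component R p (q + 1) z) = 0)
    (hz₀ : α.ε n (component R 0 n z) ∈ LinearMap.range (K.d (n + 1) n).hom) :
    z ∈ LinearMap.range (C.totalD n) := by
  obtain ⟨w, hw⟩ := hz₀
  obtain ⟨y, rfl⟩ := α.surjective_ε _ w
  obtain ⟨x, hx⟩ := C.exists_dh_add_dv_eq (z := fun p q => component R p q z)
    (y₀ := Pi.single (n + 1) y) α.exact_dh_dh hz fun q => by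
      refine (α.exact_dh_ε q _).1 ?_
      rcases eq_or_ne q n with rfl | hq
      · rw [map_sub, α.ε_dv, Pi.single_eq_same, sub_eq_zero]
        exact hw.symm
      · rw [component_of_ne (by lia), Pi.single_eq_of_ne (by lia), map_zero, sub_zero, map_zero]
  refine ⟨fun s => x s.1.1 s.1.2, funext fun s => ?_⟩
  have hs := mem_antidiagonal.1 s.2
  refine (component_coe (R := R) s _).symm.trans ?_
  rw [component_totalD, component_mk _ (by lia), component_mk _ (by lia), hx, component_coe]

lemma ExactAugmentation.length_homology_totalComplex_le [Algebra Q R]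
    [∀ p q, IsScalarTower Q R (D p q)] (α : C.ExactAugmentation K) (n : ℕ) :
    Module.length R (C.totalComplex.homology n) ≤ Module.length Q (K.homology n) := by
  let φ : Total D n →ₗ[Q] K.X n := α.ε n ∘ₗ (component R 0 n).restrictScalars Q
  let : Module Q (C.totalComplex.X n) := Pi.module _ _ Q
  have : IsScalarTower Q R (C.totalComplex.X n) :=
    inferInstanceAs (IsScalarTower Q R (Total D n))
  have hcycle {z : Total D n} (hz : ∀ m, C.totalComplex.d n m z = 0) (p q : ℕ) :
      C.dh p q (component R (p + 1) q z) + C.dv p q (component R p (q + 1) z) = 0 := by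
    cases n with
    | zero => rw [component_of_ne (by lia), component_of_ne (by lia), map_zero, map_zero, add_zero]
    | succ n =>
      have h := hz n
      rw [totalComplex_d] at h
      rw [← component_totalD]
      exact (congrArg _ h).trans (map_zero _)
  refine length_homology_le_of_reflects_boundaries (K := C.totalComplex) n φ
    (fun z hz m => ?_) fun z hz hz₀ => ?_
  · by_cases hm : m + 1 = n
    · subst hm
      have hdv := eq_neg_of_add_eq_zero_right (hcycle hz 0 m)
      refine (α.ε_dv m _).symm.trans ((congrArg (α.ε m) hdv).trans ?_)
      rw [map_neg, (α.exact_dh_ε m).apply_apply_eq_zero, neg_zero]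
    · rw [K.shape n m hm]
      rfl
  · rw [totalComplex_d]
    exact α.mem_range_totalD (hcycle hz) hz₀

end Augmentation

end DoubleComplex

end DoubleComplex

section TensorDoubleComplex

open DoubleComplex

variable {Q R M N : Type u} [CommRing Q] [CommRing R] [Algebra Q R] [AddCommGroup M] [Module R M]
  [AddCommGroup N] [Module Q N] (F : FiniteFreeResolution R M) (X : FiniteFreeResolution Q N)

namespace FiniteFreeResolution

/-- The modules of the double complex `F ⊗[Q] X`. -/
abbrev TensorModule (p q : ℕ) : Type u :=
  (Fin (F.rank p) → R) ⊗[Q] (Fin (X.rank q) → Q)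

/-- The double complex `F ⊗[Q] X`, with the usual sign on the vertical differential. -/
noncomputable def tensorDoubleComplex : DoubleComplex R (F.TensorModule X) where
  dh p q := AlgebraTensorModule.rTensor Q _ (F.d p)
  dv p q := (-1 : R) ^ p • AlgebraTensorModule.lTensor R _ (X.d q)
  dh_dh p q x := by
    rw [← LinearMap.comp_apply, ← AlgebraTensorModule.rTensor_comp,
      (F.exact_d_d p).linearMap_comp_eq_zero, map_zero, LinearMap.zero_apply]
  dv_dv p q x := by
    rw [LinearMap.smul_apply, LinearMap.smul_apply, map_smul, ← LinearMap.comp_apply,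
      ← AlgebraTensorModule.lTensor_comp, (X.exact_d_d q).linearMap_comp_eq_zero, map_zero,
      LinearMap.zero_apply, smul_zero, smul_zero]
  dh_dv p q x := by
    rw [LinearMap.smul_apply, LinearMap.smul_apply, map_smul, rTensor_lTensor_comm, pow_succ,
      mul_neg_one]
    exact neg_smul ((-1 : R) ^ p) (_ : F.TensorModule X p q)

lemma tensorDoubleComplex_dv_zero (q : ℕ) :
    (F.tensorDoubleComplex X).dv 0 q = AlgebraTensorModule.lTensor R _ (X.d q) := by
  change (-1 : R) ^ 0 • _ = _
  rw [pow_zero, one_smul]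

instance (p q : ℕ) : Module.Finite R (F.TensorModule X p q) :=
  .of_basis ((Pi.basisFun R (Fin (F.rank p))).tensorProduct (Pi.basisFun Q (Fin (X.rank q))))

lemma finrank_tensorModule [Nontrivial R] (p q : ℕ) :
    Module.finrank R (F.TensorModule X p q) = F.rank p * X.rank q := by
  have := (algebraMap Q R).domain_nontrivial
  rw [Module.finrank_tensorProduct, Module.finrank_fin_fun, Module.finrank_fin_fun]

lemma isMinimalComplex_totalComplex [IsLocalRing Q] [IsLocalRing R] [IsLocalHom (algebraMap Q R)]
    (hF : IsMinimalComplex F.complex) (hX : IsMinimalComplex X.complex) :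
    IsMinimalComplex (F.tensorDoubleComplex X).totalComplex := by
  refine DoubleComplex.isMinimalComplex_totalComplex _ (fun p q => ?_) fun p q => ?_
  · have h := hF p
    rw [complex_d] at h
    exact range_rTensor_le_smul_top h
  · have h := hX q
    rw [complex_d] at h
    rintro _ ⟨x, rfl⟩
    exact Submodule.smul_mem _ _ <| Submodule.smul_mono_left (IsLocalRing.map_maximalIdeal_le _) <|
      range_lTensor_le_smul_top h ⟨x, rfl⟩

variable [Module Q M] [IsScalarTower Q R M]

/-- The augmentation of `F ⊗[Q] X` to `M ⊗[Q] X` induced by the augmentation of `F`. -/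
noncomputable def tensorAugmentation : (F.tensorDoubleComplex X).ExactAugmentation
    ((tensorComplex X.complex).obj (ModuleCat.of Q M)) where
  ε q := LinearMap.rTensor (Fin (X.rank q) → Q) (F.ε.restrictScalars Q)
  ε_dv q x := by
    change _ = (X.complex.d (q + 1) q).hom.lTensor M _
    rw [complex_d, tensorDoubleComplex_dv_zero]
    exact rTensor_lTensor_comm F.ε (X.d q) x
  surjective_ε q := LinearMap.rTensor_surjective _ F.surjective_ε
  exact_dh_ε q := rTensor_exact _ (f := (F.d 0).restrictScalars Q) F.exact_d_ε F.surjective_ε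
  exact_dh_dh p q := Module.Flat.rTensor_exact _ (f := (F.d (p + 1)).restrictScalars Q)
    (g := (F.d p).restrictScalars Q) (F.exact_d_d p)

theorem sum_rank_mul_rank_le [IsLocalRing Q] [IsLocalRing R] [IsLocalHom (algebraMap Q R)]
    (hF : IsMinimalComplex F.complex) (hX : IsMinimalComplex X.complex)
    (G : FiniteFreeResolution R (IsLocalRing.ResidueField R)) (i : ℕ) :
    ((∑ p ∈ antidiagonal i, F.rank p.1 * X.rank p.2 : ℕ) : ℕ∞) ≤
      ∑ p ∈ antidiagonal i, G.rank p.1 *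
        Module.length Q (((tensorComplex X.complex).obj (ModuleCat.of Q M)).homology p.2) := by
  let T := (F.tensorDoubleComplex X).totalComplex
  calc
    _ = (Module.finrank R (T.X i) : ℕ∞) := by
      rw [DoubleComplex.finrank_totalComplex]
      simp only [finrank_tensorModule]
    _ = Module.length R (((tensorComplex T).obj
          (ModuleCat.of R (IsLocalRing.ResidueField R))).homology i) :=
      (length_homology_residueField_tensorComplex
        (F.isMinimalComplex_totalComplex X hF hX) i).symm
    _ ≤ ∑ p ∈ antidiagonal i, G.rank p.1 * Module.length R (T.homology p.2) :=
      length_homology_tensorComplex_le T i G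
    _ ≤ _ := by
      gcongr with p
      exact (F.tensorAugmentation X).length_homology_totalComplex_le p.2

end FiniteFreeResolution

end TensorDoubleComplex

open IsLocalRing in
theorem lescot_inequality_general (Q R : Type) [CommRing Q] [IsNoetherianRing Q] [IsLocalRing Q]
    [CommRing R] [IsNoetherianRing R] [IsLocalRing R] [Algebra Q R] [IsLocalHom (algebraMap Q R)]
    (M : Type) [AddCommGroup M] [Module Q M] [Module R M] [IsScalarTower Q R M]
    [Module.Finite Q M] (i : ℕ) :
    ∑ p ∈ Finset.range (i + 1), bettiNumber R M p * bettiNumber Q (ResidueField Q) (i - p) ≤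
      ∑ p ∈ Finset.range (i + 1), bettiNumber Q M p * bettiNumber R (ResidueField R) (i - p) := by
  have := Module.Finite.of_restrictScalars_finite Q R M
  obtain ⟨F, hF⟩ := exists_isMinimalComplex_complex (A := R) M
  obtain ⟨X, hX⟩ := exists_isMinimalComplex_complex (A := Q) (ResidueField Q)
  obtain ⟨G, hG⟩ := exists_isMinimalComplex_complex (A := R) (ResidueField R)
  have h := F.sum_rank_mul_rank_le X hF hX G i
  simp only [← bettiNumber_eq_length_homology, ← bettiNumber_residueField_eq_rank hG] at h
  rw [← Finset.Nat.sum_antidiagonal_eq_sum_range_succ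
      fun p q => bettiNumber R M p * bettiNumber Q (ResidueField Q) q,
    ← Finset.Nat.sum_antidiagonal_eq_sum_range_succ
      fun p q => bettiNumber Q M p * bettiNumber R (ResidueField R) q,
    ← Finset.Nat.sum_antidiagonal_swap (n := i)
      (f := fun p => bettiNumber Q M p.1 * bettiNumber R (ResidueField R) p.2)]
  calc
    _ ≤ ∑ p ∈ antidiagonal i, F.rank p.1 * X.rank p.2 := by
      simp only [bettiNumber_residueField_eq_rank hX]
      gcongr with p
      exact bettiNumber_le_rank F p.1
    _ ≤ ∑ p ∈ antidiagonal i, bettiNumber R (ResidueField R) p.1 * bettiNumber Q M p.2 := by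
      exact_mod_cast h
    _ = _ := Finset.sum_congr rfl fun p _ => mul_comm _ _

/-- **Lescot's inequality.** For a surjection `Q → R = Q/I` of Noetherian local
rings and a finitely generated `R`-module `M`, one has, for every `i ≥ 0`,
`∑_{p+q=i} β_p^R(M)·β_q^Q(k) ≤ ∑_{p+q=i} β_p^Q(M)·β_q^R(k)`, i.e.
`P_M^R(t)·P_k^Q(t) ≼ P_M^Q(t)·P_k^R(t)` coefficient-wise. -/
theorem lescot_inequality
    (Q : Type) [CommRing Q] [IsNoetherianRing Q] [IsLocalRing Q]
    (I : Ideal Q) (hI : I ≤ IsLocalRing.maximalIdeal Q)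
    [IsLocalRing (Q ⧸ I)]
    (M : Type) [AddCommGroup M] [Module Q M] [Module (Q ⧸ I) M]
    [IsScalarTower Q (Q ⧸ I) M] [Module.Finite (Q ⧸ I) M]
    (i : ℕ) :
    ∑ p ∈ Finset.range (i + 1),
        bettiNumber (Q ⧸ I) M p * bettiNumber Q (IsLocalRing.ResidueField Q) (i - p) ≤
      ∑ p ∈ Finset.range (i + 1),
        bettiNumber Q M p *
          bettiNumber (Q ⧸ I) (IsLocalRing.ResidueField (Q ⧸ I)) (i - p) := by
  have := IsLocalHom.of_surjective (algebraMap Q (Q ⧸ I)) Ideal.Quotient.mk_surjective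
  have := Module.Finite.trans (R := Q) (Q ⧸ I) M
  exact lescot_inequality_general Q (Q ⧸ I) M i
end

section
/- Let (Q, m, k) be a commutative Noetherian local ring, let f_1, …, f_n be a Q-regular sequence contained in m, set I = (f_1, …, f_n) and R = Q/I. If M is a finitely generated R-module with I ⊆ m·ann_Q(M), then M is inert by the surjection Q → R; that is, for every integer i ≥ 0, Σ_{p+q=i} β_p^R(M)·β_q^Q(k) = Σ_{p+q=i} β_p^Q(M)·β_q^R(k). -/
open CategoryTheory TensorProduct

/-!
Let `f ∈ 𝔪 · ann M` be regular on a local ring `A`, let `B = A/f`, and let `d` be the differential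
of a free resolution of the residue field `k` over `A`. Multiplication by `f` has a square root
`s² = f·X` among the power series `s = d + s₁X + s₂X² + …`, and the `sᵢ` can be chosen in `ann M`:
write `f = ∑ bⱼaⱼ` with `aⱼ ∈ 𝔪` and `bⱼ ∈ ann M`, solve `F² = ∑ aⱼXⱼ` with constant term `d`, which
is possible because each `aⱼ` kills `k` and hence is null-homotopic, and substitute `Xⱼ ↦ bⱼX`.

Letting `X` lower the divided powers of a variable of degree `2` turns `s` into a differential over
`B`, which resolves `k` over `B` (Shamash). After tensoring with `M` the `sᵢ` vanish, so the
homology splits: `β_n^B(M) = β_n^A(M) + β_{n-2}^B(M)`, that is, `P_M^A = (1 - t²) P_M^B`. Iterating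
along the regular sequence gives `P_M^Q = (1 - t²)ⁿ P_M^R` and likewise for `k`, so both sides of
the inertness identity are coefficients of `(1 - t²)ⁿ P_M^R P_k^R`.
-/

namespace Shamash

universe u

theorem exists_forall_of_rank {α : Type*} {β : α → Type*} [∀ a, Nonempty (β a)] (rk : α → ℕ)
    (P : (∀ a, β a) → α → Prop)
    (congr : ∀ g h a, (∀ b, rk b < rk a → g b = h b) → g a = h a → P g a → P h a)
    (extend : ∀ g a, (∀ b, rk b < rk a → P g b) → ∃ h, (∀ b, rk b < rk a → h b = g b) ∧ P h a) :
    ∃ g, ∀ a, P g a := by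
  classical
  have stage : ∀ n g, (∀ b, rk b < n → P g b) →
      ∃ h, (∀ b, rk b < n → h b = g b) ∧ ∀ b, rk b < n + 1 → P h b := by
    intro n g hg
    choose! h hh hP using fun a (ha : rk a = n) => extend g a (ha ▸ hg)
    refine ⟨fun b => if rk b = n then h b b else g b, fun b hb => if_neg hb.ne, fun b hb => ?_⟩
    obtain hb | hb := (Nat.lt_succ_iff.1 hb).lt_or_eq
    · exact congr g _ b (fun c hc => (if_neg (hc.trans hb).ne).symm) (if_neg hb.ne).symm (hg b hb)
    · refine congr (h b) _ b (fun c hc => ?_) (if_pos hb).symm (hP b hb)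
      rw [hh b hb c hc, if_neg (hb ▸ hc).ne]
  choose! next next_eq next_spec using stage
  let g₀ : ∀ a, β a := fun a => Classical.arbitrary _
  let G : ℕ → ∀ a, β a := fun n => Nat.rec g₀ next n
  have hG : ∀ n b, rk b < n → P (G n) b := fun n => by
    induction n with
    | zero => simp
    | succ n ih => exact next_spec n (G n) ih
  have stable : ∀ b n, rk b < n → G n b = G (rk b + 1) b := by
    intro b n hn
    induction n, hn using Nat.le_induction with
    | base => rfl
    | succ n hn ih => exact (next_eq n (G n) (hG n) b hn).trans ih
  refine ⟨fun a => G (rk a + 1) a, fun a => congr (G (rk a + 1)) _ a (fun b hb => ?_) rfl ?_⟩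
  · exact stable b _ (hb.trans (Nat.lt_succ_self _))
  · exact hG _ a (Nat.lt_succ_self _)

theorem prod_pow_mem {σ A : Type*} [CommSemiring A] (J : Ideal A) {b : σ → A}
    (hb : ∀ j, b j ∈ J) {γ : σ →₀ ℕ} (hγ : γ ≠ 0) : (γ.prod fun j e => b j ^ e) ∈ J := by
  obtain ⟨j, hj⟩ := Finsupp.ne_iff.1 hγ
  exact J.prod_mem (Finsupp.mem_support_iff.2 hj)
    (J.pow_mem_of_mem (hb j) _ (Nat.pos_of_ne_zero hj))

section Specialize

open Finset

variable {σ A E : Type*} [Fintype σ] [DecidableEq σ] [CommSemiring A] [Semiring E] [Algebra A E]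

/-- The image of a power series in the variables `X j` under the substitution `X j ↦ b j • X`. -/
noncomputable def specialize (b : σ → A) (F : MvPowerSeries σ E) : PowerSeries E :=
  PowerSeries.mk fun n =>
    ∑ γ ∈ univ.finsuppAntidiag n, (γ.prod fun j e => b j ^ e) • MvPowerSeries.coeff γ F

theorem coeff_specialize (b : σ → A) (F : MvPowerSeries σ E) (n : ℕ) :
    PowerSeries.coeff n (specialize b F) =
      ∑ γ ∈ univ.finsuppAntidiag n, (γ.prod fun j e => b j ^ e) • MvPowerSeries.coeff γ F :=
  PowerSeries.coeff_mk _ _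

theorem specialize_mul (b : σ → A) (F G : MvPowerSeries σ E) :
    specialize b (F * G) = specialize b F * specialize b G := by
  ext n
  simp only [coeff_specialize, PowerSeries.coeff_mul, MvPowerSeries.coeff_mul, smul_sum,
    sum_mul_sum, ← sum_product', sum_sigma']
  refine sum_nbij' (fun x => ⟨(∑ j, x.2.1 j, ∑ j, x.2.2 j), x.2⟩) (fun x => ⟨x.2.1 + x.2.2, x.2⟩)
    ?_ ?_ ?_ ?_ ?_
  · rintro ⟨γ, α, β⟩ h
    simp only [mem_sigma, mem_finsuppAntidiag, HasAntidiagonal.mem_antidiagonal, mem_product] at h ⊢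
    obtain ⟨⟨rfl, -⟩, rfl⟩ := h
    simp [sum_add_distrib]
  · rintro ⟨⟨p, q⟩, α, β⟩ h
    simp only [mem_sigma, mem_finsuppAntidiag, HasAntidiagonal.mem_antidiagonal, mem_product] at h ⊢
    obtain ⟨rfl, ⟨rfl, -⟩, rfl, -⟩ := h
    simp [sum_add_distrib]
  · rintro ⟨γ, α, β⟩ h
    simp only [mem_sigma, HasAntidiagonal.mem_antidiagonal] at h
    obtain ⟨-, rfl⟩ := h
    rfl
  · rintro ⟨⟨p, q⟩, α, β⟩ h
    simp only [mem_sigma, mem_finsuppAntidiag, HasAntidiagonal.mem_antidiagonal, mem_product] at h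
    obtain ⟨-, ⟨rfl, -⟩, rfl, -⟩ := h
    rfl
  · rintro ⟨γ, α, β⟩ h
    simp only [mem_sigma, HasAntidiagonal.mem_antidiagonal] at h
    obtain ⟨-, rfl⟩ := h
    rw [Finsupp.prod_add_index' (fun _ => pow_zero _) (fun _ _ _ => pow_add _ _ _),
      smul_mul_smul_comm]

theorem specialize_sum_monomial (b : σ → A) (x : σ → E) :
    specialize b (∑ j, MvPowerSeries.monomial (Finsupp.single j 1) (x j)) =
      PowerSeries.monomial 1 (∑ j, b j • x j) := by
  ext n
  simp only [coeff_specialize, map_sum, MvPowerSeries.coeff_monomial, PowerSeries.coeff_monomial,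
    smul_sum, smul_ite, smul_zero]
  rw [sum_comm]
  split_ifs with hn
  · refine sum_congr rfl fun j _ => ?_
    rw [sum_ite_eq', if_pos]
    · simp
    · simp [mem_finsuppAntidiag, hn, Finsupp.single_apply]
  · refine sum_congr rfl fun j _ => ?_
    rw [sum_ite_eq', if_neg]
    simpa [mem_finsuppAntidiag, Finsupp.single_apply] using Ne.symm hn

end Specialize

section Grading

variable (A M : Type*) [CommRing A] [AddCommGroup M] [Module A M] {κ : Type*} (deg : κ → ℕ)

/-- The vectors of degree `n` in `κ →₀ M`, where the coordinate `c` has degree `deg c`. Degrees are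
integers, so that homogeneous maps may lower them without truncation. -/
def degreePart (n : ℤ) : Submodule A (κ →₀ M) :=
  Finsupp.supported M A {c | (deg c : ℤ) = n}

/-- The endomorphisms of `κ →₀ M` that raise degrees by `e`. -/
def homogeneousEnd (e : ℤ) : Submodule A (Module.End A (κ →₀ M)) where
  carrier := {X | ∀ n, ∀ x ∈ degreePart A M deg n, X x ∈ degreePart A M deg (n + e)}
  add_mem' hX hY n x hx := add_mem (hX n x hx) (hY n x hx)
  zero_mem' _ _ _ := zero_mem _
  smul_mem' a _ hX n x hx := Submodule.smul_mem _ a (hX n x hx)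

variable {A M deg}

theorem single_mem_degreePart {n : ℤ} {c : κ} (hc : (deg c : ℤ) = n) (m : M) :
    Finsupp.single c m ∈ degreePart A M deg n :=
  Finsupp.single_mem_supported A m hc

theorem eq_zero_of_mem_degreePart_of_neg {n : ℤ} (hn : n < 0) {x : κ →₀ M}
    (hx : x ∈ degreePart A M deg n) : x = 0 := by
  ext c
  refine (Finsupp.mem_supported' A x).1 hx c fun hc => ?_
  have hc' : (deg c : ℤ) = n := hc
  omega

theorem isSMulRegular_finsupp {a : A} (ha : IsSMulRegular M a) : IsSMulRegular (κ →₀ M) a :=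
  fun _ _ h => Finsupp.ext fun c => ha (DFunLike.congr_fun h c)

theorem mem_degreePart_of_smul_mem {n : ℤ} {a : A} (ha : IsSMulRegular M a) {x : κ →₀ M}
    (hx : a • x ∈ degreePart A M deg n) : x ∈ degreePart A M deg n :=
  (Finsupp.mem_supported' A x).2 fun c hc =>
    ha.right_eq_zero_of_smul ((Finsupp.mem_supported' A (a • x)).1 hx c hc)

theorem degreePart_le_iff {n : ℤ} {P : Submodule A (κ →₀ M)} :
    degreePart A M deg n ≤ P ↔ ∀ c m, (deg c : ℤ) = n → Finsupp.single c m ∈ P := by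
  refine ⟨fun h c m hc => h (single_mem_degreePart hc m), fun h x hx => ?_⟩
  rw [← x.sum_single]
  exact Submodule.sum_mem _ fun c hc => h c _ ((Finsupp.mem_supported A x).1 hx hc)

theorem degreePart_le_iff_single_one {n : ℤ} {P : Submodule A (κ →₀ A)} :
    degreePart A A deg n ≤ P ↔ ∀ c, (deg c : ℤ) = n → Finsupp.single c 1 ∈ P := by
  refine degreePart_le_iff.trans ⟨fun h c => h c 1, fun h c a hc => ?_⟩
  rw [← mul_one a, ← smul_eq_mul, ← Finsupp.smul_single]
  exact Submodule.smul_mem _ a (h c hc)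

theorem mem_homogeneousEnd_iff_single {e : ℤ} {X : Module.End A (κ →₀ M)} :
    X ∈ homogeneousEnd A M deg e ↔
      ∀ c m, X (Finsupp.single c m) ∈ degreePart A M deg (deg c + e) := by
  refine ⟨fun h c m => h _ _ (single_mem_degreePart rfl m), fun h n => ?_⟩
  refine degreePart_le_iff (P := (degreePart A M deg (n + e)).comap X).2 ?_
  rintro c m rfl
  exact h c m

theorem mem_homogeneousEnd_iff_single_one {e : ℤ} {X : Module.End A (κ →₀ A)} :
    X ∈ homogeneousEnd A A deg e ↔
      ∀ c, X (Finsupp.single c 1) ∈ degreePart A A deg (deg c + e) := by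
  refine ⟨fun h c => h _ _ (single_mem_degreePart rfl 1), fun h n => ?_⟩
  refine (degreePart_le_iff_single_one (P := (degreePart A A deg (n + e)).comap X)).2 ?_
  rintro c rfl
  exact h c

theorem mul_mem_homogeneousEnd {e e' : ℤ} {X Y : Module.End A (κ →₀ M)}
    (hX : X ∈ homogeneousEnd A M deg e) (hY : Y ∈ homogeneousEnd A M deg e') :
    X * Y ∈ homogeneousEnd A M deg (e + e') := fun n x hx => by
  rw [add_comm e e', ← add_assoc]
  exact hX _ _ (hY _ _ hx)

end Grading

section Resolution

variable {A K κ : Type*} [CommRing A] [AddCommGroup K] [Module A K]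

/-- The total differential `d` and the augmentation `ε` of a graded free resolution of `K`, whose
term of degree `n` has the basis `{c : κ | deg c = n}`. -/
structure IsResolution (deg : κ → ℕ) (d : Module.End A (κ →₀ A)) (ε : (κ →₀ A) →ₗ[A] K) :
    Prop where
  homogeneous : d ∈ homogeneousEnd A A deg (-1)
  sq_eq_zero : d * d = 0
  exact : ∀ n, 0 ≤ n → ∀ x ∈ degreePart A A deg n, d x = 0 → (n = 0 → ε x = 0) →
    ∃ y ∈ degreePart A A deg (n + 1), d y = x
  augmentation : ∀ y ∈ degreePart A A deg 1, ε (d y) = 0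
  surjective : ∀ k, ∃ x ∈ degreePart A A deg 0, ε x = k

namespace IsResolution

variable {deg : κ → ℕ} {d : Module.End A (κ →₀ A)} {ε : (κ →₀ A) →ₗ[A] K}

theorem exists_nullhomotopy_at (hd : IsResolution deg d ε) {e : ℤ} (he : 0 ≤ e)
    {τ : Module.End A (κ →₀ A)} (hτ : τ ∈ homogeneousEnd A A deg e) (comm : d * τ = τ * d)
    (hτ0 : e = 0 → ∀ x ∈ degreePart A A deg 0, ε (τ x) = 0) {h : Module.End A (κ →₀ A)} {n : ℕ}
    (hh : ∀ x ∈ degreePart A A deg (n - 1),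
      h x ∈ degreePart A A deg (n + e) ∧ d (h x) + h (d x) = τ x)
    {x : κ →₀ A} (hx : x ∈ degreePart A A deg n) :
    ∃ y ∈ degreePart A A deg (n + e + 1), d y + h (d x) = τ x := by
  obtain ⟨h_mem, h_eq⟩ := hh (d x) (hd.homogeneous _ _ hx)
  have d_sq : d (d x) = 0 := LinearMap.congr_fun hd.sq_eq_zero x
  have d_comm : d (τ x) = τ (d x) := LinearMap.congr_fun comm x
  rw [d_sq, map_zero, add_zero] at h_eq
  obtain ⟨y, hy, hdy⟩ := hd.exact _ (by omega) _
    (sub_mem (hτ _ _ hx) h_mem) (by rw [map_sub, h_eq, d_comm, sub_self]) fun hne => by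
      obtain rfl : n = 0 := by omega
      obtain rfl : e = 0 := by omega
      have dx : d x = 0 := eq_zero_of_mem_degreePart_of_neg (by simp) (hd.homogeneous _ _ hx)
      rw [dx, map_zero, sub_zero]
      exact hτ0 rfl x hx
  exact ⟨y, hy, by rw [hdy, sub_add_cancel]⟩

theorem exists_nullhomotopy (hd : IsResolution deg d ε) {e : ℤ} (he : 0 ≤ e)
    {τ : Module.End A (κ →₀ A)} (hτ : τ ∈ homogeneousEnd A A deg e) (comm : d * τ = τ * d)
    (hτ0 : e = 0 → ∀ x ∈ degreePart A A deg 0, ε (τ x) = 0) :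
    ∃ h ∈ homogeneousEnd A A deg (e + 1), d * h + h * d = τ := by
  let lift (g : κ → κ →₀ A) : Module.End A (κ →₀ A) := Finsupp.linearCombination A g
  have lift_single (g : κ → κ →₀ A) (c : κ) : lift g (.single c 1) = g c := by simp [lift]
  have d_single (c : κ) : d (.single c 1) ∈ degreePart A A deg (deg c - 1) :=
    hd.homogeneous _ _ (single_mem_degreePart rfl 1)
  have lift_congr {g g' : κ → κ →₀ A} {c : κ} (h : ∀ b, deg b < deg c → g b = g' b) :
      lift g (d (.single c 1)) = lift g' (d (.single c 1)) := by
    simp only [lift, Finsupp.linearCombination_apply]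
    refine Finsupp.sum_congr fun b hb => ?_
    have hb' : (deg b : ℤ) = deg c - 1 := d_single c hb
    rw [h b (by omega)]
  obtain ⟨g, hg⟩ := exists_forall_of_rank deg
    (fun g c => g c ∈ degreePart A A deg (deg c + e + 1) ∧
      d (g c) + lift g (d (.single c 1)) = τ (.single c 1))
    (fun g g' c hlt heq hg => by rwa [← heq, ← lift_congr hlt])
    (fun g c hg => by
      classical
      have lift_spec : ∀ x ∈ degreePart A A deg (deg c - 1),
          lift g x ∈ degreePart A A deg (deg c + e) ∧ d (lift g x) + lift g (d x) = τ x := by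
        have hle : degreePart A A deg (deg c - 1) ≤
            (degreePart A A deg (deg c + e)).comap (lift g) ⊓
              LinearMap.eqLocus (d * lift g + lift g * d) τ :=
          degreePart_le_iff_single_one.2 fun b hb => by
            obtain ⟨hgb, hdgb⟩ := hg b (by omega)
            rw [hb, sub_add_eq_add_sub, sub_add_cancel] at hgb
            simp [lift_single, hgb, hdgb]
        exact fun x hx => hle hx
      obtain ⟨y, hy, hdy⟩ := hd.exists_nullhomotopy_at he hτ comm hτ0 lift_spec
        (single_mem_degreePart rfl 1)
      have update_of_lt (b : κ) (hb : deg b < deg c) : Function.update g c y b = g b :=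
        Function.update_of_ne (by rintro rfl; omega) _ _
      refine ⟨Function.update g c y, update_of_lt, ?_⟩
      rw [lift_congr update_of_lt, Function.update_self]
      exact ⟨hy, hdy⟩)
  refine ⟨lift g, mem_homogeneousEnd_iff_single_one.2 fun c => ?_, ?_⟩
  · rw [lift_single, ← add_assoc]
    exact (hg c).1
  · refine Finsupp.lhom_ext' fun c => LinearMap.ext_ring ?_
    simpa [lift_single] using (hg c).2

end IsResolution

end Resolution

section HigherHomotopies

open Finset MvPowerSeries

variable {σ : Type*}

theorem degree_lt_degree {β γ : σ →₀ ℕ} (h : β < γ) : β.degree < γ.degree := by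
  obtain ⟨δ, rfl⟩ := exists_add_of_le h.le
  have hδ : δ.degree ≠ 0 := by
    rw [Ne, Finsupp.degree_eq_zero_iff]
    rintro rfl
    simp at h
  rw [map_add]
  omega

theorem coeff_mul_of_coeff_eq_zero {R : Type*} [Semiring R] {γ : σ →₀ ℕ} {G : MvPowerSeries σ R}
    (hG : ∀ β, β.degree < γ.degree → coeff β G = 0) (F : MvPowerSeries σ R) :
    coeff γ (F * G) = coeff 0 F * coeff γ G := by
  classical
  rw [coeff_mul, sum_eq_single_of_mem (0, γ) (by simp)]
  rintro ⟨α, β⟩ hαβ hne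
  rw [HasAntidiagonal.mem_antidiagonal] at hαβ
  subst hαβ
  have hα : α.degree ≠ 0 := by
    rw [Ne, Finsupp.degree_eq_zero_iff]
    rintro rfl
    simp at hne
  rw [hG β (by simp only [map_add]; omega), mul_zero]

theorem coeff_mul_of_coeff_eq_zero' {R : Type*} [Semiring R] {γ : σ →₀ ℕ} {F : MvPowerSeries σ R}
    (hF : ∀ β, β.degree < γ.degree → coeff β F = 0) (G : MvPowerSeries σ R) :
    coeff γ (F * G) = coeff γ F * coeff 0 G := by
  classical
  rw [coeff_mul, sum_eq_single_of_mem (γ, 0) (by simp)]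
  rintro ⟨α, β⟩ hαβ hne
  rw [HasAntidiagonal.mem_antidiagonal] at hαβ
  subst hαβ
  have hβ : β.degree ≠ 0 := by
    rw [Ne, Finsupp.degree_eq_zero_iff]
    rintro rfl
    simp at hne
  rw [hF α (by simp only [map_add]; omega), zero_mul]

theorem coeff_mul_self_eq_zero {R : Type*} [Semiring R] {γ : σ →₀ ℕ} {F : MvPowerSeries σ R}
    (hγ : γ.degree = 1) (hF : coeff γ F = 0) : coeff γ (F * F) = 0 := by
  classical
  rw [coeff_mul]
  refine sum_eq_zero fun ⟨α, β⟩ h => ?_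
  obtain rfl := HasAntidiagonal.mem_antidiagonal.1 h
  rw [map_add, Nat.add_eq_one_iff, Finsupp.degree_eq_zero_iff, Finsupp.degree_eq_zero_iff] at hγ
  obtain ⟨rfl, -⟩ | ⟨-, rfl⟩ := hγ <;> simp_all

theorem coeff_mul_self_of_forall_degree_lt {R : Type*} [Ring R] {γ : σ →₀ ℕ}
    {F G : MvPowerSeries σ R} (hFG : ∀ β, β.degree < γ.degree → coeff β G = coeff β F) :
    coeff γ (G * G) = coeff γ (F * F) +
      (coeff 0 F * (coeff γ G - coeff γ F) + (coeff γ G - coeff γ F) * coeff 0 G) := by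
  have hsub : ∀ β, β.degree < γ.degree → coeff β (G - F) = 0 := fun β hβ => by
    rw [map_sub, hFG β hβ, sub_self]
  rw [show G * G = F * F + (F * (G - F) + (G - F) * G) by noncomm_ring, map_add, map_add,
    coeff_mul_of_coeff_eq_zero hsub, coeff_mul_of_coeff_eq_zero' hsub, map_sub]

theorem commute_coeff_sub_coeff_mul_self {R : Type*} [Ring R] {γ : σ →₀ ℕ}
    {F L : MvPowerSeries σ R} (hFL : Commute F L)
    (hlt : ∀ β, β.degree < γ.degree → coeff β (F * F) = coeff β L) :
    Commute (coeff 0 F) (coeff γ L - coeff γ (F * F)) := by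
  have hsub : ∀ β, β.degree < γ.degree → coeff β (L - F * F) = 0 := fun β hβ => by
    rw [map_sub, hlt β hβ, sub_self]
  rw [commute_iff_eq, ← map_sub, ← coeff_mul_of_coeff_eq_zero hsub,
    ← coeff_mul_of_coeff_eq_zero' hsub, mul_sub, sub_mul, hFL.eq, mul_assoc]

variable {A E : Type*} [CommRing A] [Ring E] [Algebra A E]

theorem coeff_mul_self_mem (H : ℤ → Submodule A E) [SetLike.GradedMonoid H] {γ : σ →₀ ℕ}
    {F : MvPowerSeries σ E} (hF : ∀ β ≤ γ, coeff β F ∈ H (2 * β.degree - 1)) :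
    coeff γ (F * F) ∈ H (2 * γ.degree - 2) := by
  classical
  rw [coeff_mul]
  refine Submodule.sum_mem _ fun ⟨α, β⟩ h => ?_
  obtain rfl := HasAntidiagonal.mem_antidiagonal.1 h
  convert SetLike.GradedMul.mul_mem (hF α le_self_add) (hF β le_add_self) using 2
  rw [map_add, Nat.cast_add]
  ring

/-- The linear form `∑ j, a j X j` with coefficients in an `A`-algebra `E`. -/
noncomputable def linearForm (E : Type*) [Ring E] [Algebra A E] [Fintype σ] (a : σ → A) :
    MvPowerSeries σ E :=
  ∑ j, monomial (Finsupp.single j 1) (algebraMap A E (a j))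

theorem commute_linearForm [Fintype σ] (a : σ → A) (F : MvPowerSeries σ E) :
    Commute F (linearForm E a) :=
  .sum_right _ _ _ fun _ _ => (commute_monomial _).2 fun _ => (Algebra.commutes _ _).symm

variable [Fintype σ] (a : σ → A)

theorem coeff_linearForm_single (j : σ) :
    coeff (Finsupp.single j 1) (linearForm E a) = algebraMap A E (a j) := by
  classical
  simp [linearForm, coeff_monomial, Finsupp.single_left_inj]

theorem coeff_linearForm_of_degree_ne_one {γ : σ →₀ ℕ} (hγ : γ.degree ≠ 1) :
    coeff γ (linearForm E a) = 0 := by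
  rw [linearForm, map_sum]
  exact sum_eq_zero fun j _ => coeff_monomial_ne (by rintro rfl; simp at hγ) _

/-- The power series `F` solves `F * F = ∑ j, a j X j`, with constant coefficient `d` and
coefficients of degree `2 * γ.degree - 1`, as far as the coefficient at `γ` is concerned. -/
structure IsHigherHomotopyAt (H : ℤ → Submodule A E) (d : E) (F : MvPowerSeries σ E)
    (γ : σ →₀ ℕ) : Prop where
  coeff_zero : γ = 0 → coeff γ F = d
  mem : coeff γ F ∈ H (2 * γ.degree - 1)
  mul_self : coeff γ (F * F) = coeff γ (linearForm E a)

theorem exists_higherHomotopy_at (H : ℤ → Submodule A E) [SetLike.GradedMonoid H] {d : E}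
    (lift : ∀ e > 0, ∀ τ ∈ H e, Commute d τ → ∃ h ∈ H (e + 1), d * h + h * d = τ)
    (ha : ∀ j, ∃ h ∈ H 1, d * h + h * d = algebraMap A E (a j)) {γ : σ →₀ ℕ} (hγ : γ ≠ 0)
    {F : MvPowerSeries σ E} (hF0 : coeff 0 F = d) (hFγ : coeff γ F = 0)
    (hF : ∀ β ≤ γ, coeff β F ∈ H (2 * β.degree - 1))
    (hFF : ∀ β, β.degree < γ.degree → coeff β (F * F) = coeff β (linearForm E a)) :
    ∃ h ∈ H (2 * γ.degree - 1), coeff γ (F * F) + (d * h + h * d) = coeff γ (linearForm E a) := by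
  have hγ_deg : γ.degree ≠ 0 := by rwa [Ne, Finsupp.degree_eq_zero_iff]
  obtain hγ_one | hγ_one := eq_or_ne γ.degree 1
  · obtain ⟨j, rfl⟩ := (Finsupp.sum_eq_one_iff γ).1 hγ_one
    obtain ⟨h, hh, hdh⟩ := ha j
    refine ⟨h, by simpa [hγ_one] using hh, ?_⟩
    rw [coeff_mul_self_eq_zero hγ_one hFγ, zero_add, hdh, coeff_linearForm_single]
  · have comm := commute_coeff_sub_coeff_mul_self (commute_linearForm a F) hFF
    rw [coeff_linearForm_of_degree_ne_one a hγ_one, zero_sub, hF0] at comm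
    obtain ⟨h, hh, hdh⟩ := lift (2 * γ.degree - 2) (by omega) _
      (neg_mem (coeff_mul_self_mem H hF)) comm
    refine ⟨h, by convert hh using 2; ring, ?_⟩
    rw [hdh, add_neg_cancel, coeff_linearForm_of_degree_ne_one a hγ_one]

variable {a}

theorem IsHigherHomotopyAt.congr {H : ℤ → Submodule A E} {d : E} {F G : MvPowerSeries σ E}
    {γ : σ →₀ ℕ} (hlt : ∀ β, β.degree < γ.degree → coeff β F = coeff β G)
    (heq : coeff γ F = coeff γ G) (hF : IsHigherHomotopyAt a H d F γ) :
    IsHigherHomotopyAt a H d G γ where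
  coeff_zero h := heq ▸ hF.coeff_zero h
  mem := heq ▸ hF.mem
  mul_self := by
    rw [← hF.mul_self, coeff_mul_self_of_forall_degree_lt hlt, heq, sub_self, mul_zero, zero_mul,
      add_zero, add_zero]

theorem exists_isHigherHomotopyAt (H : ℤ → Submodule A E) [SetLike.GradedMonoid H] {d : E}
    (hd : d ∈ H (-1)) (d_sq : d * d = 0)
    (lift : ∀ e > 0, ∀ τ ∈ H e, Commute d τ → ∃ h ∈ H (e + 1), d * h + h * d = τ)
    (ha : ∀ j, ∃ h ∈ H 1, d * h + h * d = algebraMap A E (a j)) (F : MvPowerSeries σ E)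
    (γ : σ →₀ ℕ) (hF : ∀ β, β.degree < γ.degree → IsHigherHomotopyAt a H d F β) :
    ∃ G : MvPowerSeries σ E, (∀ β, β.degree < γ.degree → coeff β G = coeff β F) ∧
      IsHigherHomotopyAt a H d G γ := by
  classical
  let G (h : E) : MvPowerSeries σ E := Function.update F γ h
  have hG_same (h : E) : coeff γ (G h) = h := Function.update_self ..
  have hG_lt (h : E) (β) (hβ : β.degree < γ.degree) : coeff β (G h) = coeff β F :=
    Function.update_of_ne (by rintro rfl; exact hβ.false) ..
  obtain rfl | hγ := eq_or_ne γ 0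
  · exact ⟨G d, hG_lt d, fun _ => hG_same d, by simpa [hG_same] using hd, by
      simp [coeff_mul, hG_same, d_sq, coeff_linearForm_of_degree_ne_one]⟩
  have hG_lower β (hβ : β.degree < γ.degree) : IsHigherHomotopyAt a H d (G 0) β :=
    (hF β hβ).congr (fun α hα => (hG_lt 0 α (hα.trans hβ)).symm) (hG_lt 0 β hβ).symm
  have hγ_pos : (0 : σ →₀ ℕ).degree < γ.degree := degree_lt_degree (pos_iff_ne_zero.2 hγ)
  have hG_zero (h : E) : coeff 0 (G h) = d := by
    rw [hG_lt h 0 hγ_pos, ← hG_lt 0 0 hγ_pos, (hG_lower 0 hγ_pos).coeff_zero rfl]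
  obtain ⟨h, hh, hdh⟩ := exists_higherHomotopy_at a H lift ha hγ (hG_zero 0) (hG_same 0)
    (fun β hβ => by
      obtain rfl | hβ := hβ.eq_or_lt
      · rw [hG_same]
        exact zero_mem _
      · exact (hG_lower β (degree_lt_degree hβ)).mem)
    fun β hβ => (hG_lower β hβ).mul_self
  refine ⟨G h, hG_lt h, fun h0 => (hγ h0).elim, by rwa [hG_same], ?_⟩
  rw [← hdh, coeff_mul_self_of_forall_degree_lt (F := G 0)
    fun β hβ => (hG_lt h β hβ).trans (hG_lt 0 β hβ).symm, hG_same, hG_same, sub_zero, hG_zero,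
    hG_zero]

theorem exists_mul_self_eq_linearForm (H : ℤ → Submodule A E) [SetLike.GradedMonoid H] {d : E}
    (hd : d ∈ H (-1)) (d_sq : d * d = 0)
    (lift : ∀ e > 0, ∀ τ ∈ H e, Commute d τ → ∃ h ∈ H (e + 1), d * h + h * d = τ)
    (ha : ∀ j, ∃ h ∈ H 1, d * h + h * d = algebraMap A E (a j)) :
    ∃ F : MvPowerSeries σ E, coeff 0 F = d ∧ (∀ γ, coeff γ F ∈ H (2 * γ.degree - 1)) ∧
      F * F = linearForm E a := by
  obtain ⟨F, hF⟩ := exists_forall_of_rank (β := fun _ => E) Finsupp.degree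
    (IsHigherHomotopyAt a H d) (fun _ _ _ hlt heq hF => hF.congr hlt heq)
    (exists_isHigherHomotopyAt H hd d_sq lift ha)
  exact ⟨F, (hF 0).coeff_zero rfl, fun γ => (hF γ).mem, MvPowerSeries.ext fun γ => (hF γ).mul_self⟩

theorem exists_powerSeries_mul_self_eq (H : ℤ → Submodule A E) [SetLike.GradedMonoid H] {d : E}
    (hd : d ∈ H (-1)) (d_sq : d * d = 0)
    (lift : ∀ e > 0, ∀ τ ∈ H e, Commute d τ → ∃ h ∈ H (e + 1), d * h + h * d = τ)
    (ha : ∀ j, ∃ h ∈ H 1, d * h + h * d = algebraMap A E (a j)) (J : Ideal A) {b : σ → A}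
    (hb : ∀ j, b j ∈ J) :
    ∃ s : PowerSeries E, PowerSeries.coeff 0 s = d ∧
      (∀ n : ℕ, PowerSeries.coeff n s ∈ H (2 * n - 1)) ∧
      (∀ n ≠ 0, PowerSeries.coeff n s ∈ J • (⊤ : Submodule A E)) ∧
      s * s = PowerSeries.monomial 1 (algebraMap A E (∑ j, b j * a j)) := by
  classical
  obtain ⟨F, hF0, hF, hFF⟩ := exists_mul_self_eq_linearForm H hd d_sq lift ha
  refine ⟨specialize b F, ?_, fun n => ?_, fun n hn => ?_, ?_⟩
  · simp [coeff_specialize, hF0]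
  · rw [coeff_specialize]
    refine Submodule.sum_mem _ fun γ hγ => Submodule.smul_mem _ _ ?_
    obtain ⟨rfl, -⟩ := mem_finsuppAntidiag.1 hγ
    rw [← Finsupp.degree_eq_sum]
    exact hF γ
  · rw [coeff_specialize]
    refine Submodule.sum_mem _ fun γ hγ => Submodule.smul_mem_smul (prod_pow_mem J hb ?_) trivial
    rintro rfl
    simp [mem_finsuppAntidiag, eq_comm, hn] at hγ
  · rw [← specialize_mul, hFF, linearForm, specialize_sum_monomial]
    simp [Algebra.smul_def]

end HigherHomotopies

section ShamashSeries

variable {A K κ : Type*} [CommRing A] [AddCommGroup K] [Module A K] {deg : κ → ℕ}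
  {d : Module.End A (κ →₀ A)} {ε : (κ →₀ A) →ₗ[A] K}

instance : SetLike.GradedMonoid (homogeneousEnd A A deg) where
  one_mem n x hx := by rwa [add_zero]
  mul_mem _ _ _ _ := mul_mem_homogeneousEnd

theorem algebraMap_mem_homogeneousEnd (a : A) :
    algebraMap A (Module.End A (κ →₀ A)) a ∈ homogeneousEnd A A deg 0 := fun n x hx => by
  rw [add_zero]
  exact Submodule.smul_mem _ a hx

/-- A system of higher homotopies `s = ∑ sₙ Xⁿ` for the multiplication by `f` on the complex with
differential `d = s₀`: the `sₙ` have degree `2n - 1`, and `s² = f X`. -/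
structure IsHomotopySystem (deg : κ → ℕ) (d : Module.End A (κ →₀ A)) (f : A)
    (s : PowerSeries (Module.End A (κ →₀ A))) : Prop where
  coeff_zero : PowerSeries.coeff 0 s = d
  homogeneous : ∀ n : ℕ, PowerSeries.coeff n s ∈ homogeneousEnd A A deg (2 * n - 1)
  mul_self : s * s = PowerSeries.monomial 1 (algebraMap A _ f)

theorem IsResolution.exists_isHomotopySystem (hd : IsResolution deg d ε) {I J : Ideal A}
    (hI : ∀ a ∈ I, ∀ k : K, a • k = 0) {f : A} (hf : f ∈ J * I) :
    ∃ s, IsHomotopySystem deg d f s ∧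
      ∀ n ≠ 0, PowerSeries.coeff n s ∈ J • (⊤ : Submodule A (Module.End A (κ →₀ A))) := by
  rw [← smul_eq_mul, ← I.span_eq, ← Subtype.range_coe (s := (I : Set A)),
    Submodule.mem_ideal_smul_span_iff_exists_sum] at hf
  obtain ⟨b, hb, rfl⟩ := hf
  have lift (e : ℤ) (he : e > 0) τ (hτ : τ ∈ homogeneousEnd A A deg e) (comm : Commute d τ) :
      ∃ h ∈ homogeneousEnd A A deg (e + 1), d * h + h * d = τ :=
    hd.exists_nullhomotopy he.le hτ comm fun h0 => (he.ne' h0).elim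
  have ha (a : I) : ∃ h ∈ homogeneousEnd A A deg 1, d * h + h * d = algebraMap A _ (a : A) :=
    hd.exists_nullhomotopy le_rfl (algebraMap_mem_homogeneousEnd (a : A))
      (Algebra.commutes _ _).symm fun _ x _ => by
        rw [Module.algebraMap_end_apply, map_smul, hI a a.2]
  obtain ⟨s, hs0, hs, hsJ, hss⟩ := exists_powerSeries_mul_self_eq (homogeneousEnd A A deg)
    hd.homogeneous hd.sq_eq_zero lift (fun a : b.support => ha a) J fun a => hb a
  rw [Finset.sum_coe_sort b.support fun i => b i * (i : A)] at hss
  exact ⟨s, ⟨hs0, hs, hss⟩, hsJ⟩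

end ShamashSeries

section DividedPowers

variable (A M : Type*) {κ : Type*} [CommRing A] [AddCommGroup M] [Module A M]

/-- The inclusion of `κ →₀ M` as the summand with exponent `j` of `κ × ℕ →₀ M`, that is, of the
module of divided powers of one variable with coefficients in `κ →₀ M`. -/
noncomputable def embed (j : ℕ) : (κ →₀ M) →ₗ[A] (κ × ℕ →₀ M) :=
  Finsupp.lmapDomain M A (·, j)

/-- The projection onto the summand with exponent `0`. -/
noncomputable def bottom : (κ × ℕ →₀ M) →ₗ[A] (κ →₀ M) :=
  Finsupp.lcomapDomain (·, 0) fun _ _ h => (Prod.mk.inj h).1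

/-- Raises the exponent of the divided power variable by `1`. -/
noncomputable def raise : Module.End A (κ × ℕ →₀ M) :=
  Finsupp.lmapDomain M A fun c => (c.1, c.2 + 1)

/-- Lowers the exponent of the divided power variable by `1`, and kills the summand with
exponent `0`. -/
noncomputable def lower : Module.End A (κ × ℕ →₀ M) :=
  Finsupp.lcomapDomain (fun c => (c.1, c.2 + 1)) fun _ _ h => by simpa [Prod.ext_iff] using h

/-- The degrees on `κ × ℕ`: the divided power variable has degree `2`. -/
def shamashDeg (deg : κ → ℕ) (c : κ × ℕ) : ℕ := deg c.1 + 2 * c.2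

variable {A M} {deg : κ → ℕ}

theorem embed_single (j : ℕ) (c : κ) (m : M) : embed A M j (.single c m) = .single (c, j) m :=
  Finsupp.mapDomain_single

theorem raise_single (c : κ × ℕ) (m : M) :
    raise A M (.single c m) = .single (c.1, c.2 + 1) m :=
  Finsupp.mapDomain_single

theorem embed_injective (j : ℕ) : Function.Injective (embed A M j : (κ →₀ M) → (κ × ℕ →₀ M)) :=
  Finsupp.mapDomain_injective fun _ _ h => (Prod.mk.inj h).1

theorem bottom_embed_zero (x : κ →₀ M) : bottom A M (embed A M 0 x) = x := by
  ext c
  exact Finsupp.mapDomain_apply (fun _ _ h => (Prod.mk.inj h).1) x c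

theorem bottom_raise (v : κ × ℕ →₀ M) : bottom A M (raise A M v) = 0 := by
  ext c
  exact Finsupp.mapDomain_of_notMem_range _ _ (by simp)

theorem lower_embed_zero (x : κ →₀ M) : lower A M (embed A M 0 x) = 0 := by
  ext c
  exact Finsupp.mapDomain_of_notMem_range _ _ (by simp)

theorem lower_raise (v : κ × ℕ →₀ M) : lower A M (raise A M v) = v := by
  ext c
  exact Finsupp.mapDomain_apply (fun _ _ h => by simpa [Prod.ext_iff] using h) v c

theorem linearMap_ext_embed {N : Type*} [AddCommMonoid N] [Module A N]
    {f g : (κ × ℕ →₀ M) →ₗ[A] N} (h : ∀ j x, f (embed A M j x) = g (embed A M j x)) : f = g :=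
  Finsupp.lhom_ext fun c m => by simpa only [embed_single] using h c.2 (.single c.1 m)

theorem raise_embed (j : ℕ) (x : κ →₀ M) : raise A M (embed A M j x) = embed A M (j + 1) x := by
  simp only [raise, embed, Finsupp.lmapDomain_apply, ← Finsupp.mapDomain_comp]
  rfl

theorem bottom_embed_succ (j : ℕ) (x : κ →₀ M) : bottom A M (embed A M (j + 1) x) = 0 := by
  rw [← raise_embed, bottom_raise]

theorem lower_embed_succ (j : ℕ) (x : κ →₀ M) :
    lower A M (embed A M (j + 1) x) = embed A M j x := by
  rw [← raise_embed, lower_raise]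

theorem embed_bottom_add_raise_lower (w : κ × ℕ →₀ M) :
    embed A M 0 (bottom A M w) + raise A M (lower A M w) = w := by
  have : embed A M 0 ∘ₗ bottom A M + raise A M ∘ₗ lower A M =
      (LinearMap.id : (κ × ℕ →₀ M) →ₗ[A] _) :=
    linearMap_ext_embed fun j x => by
      cases j <;> simp [bottom_embed_zero, bottom_embed_succ, lower_embed_zero, lower_embed_succ,
        raise_embed]
  exact LinearMap.congr_fun this w

theorem embed_mem_degreePart {n : ℤ} (j : ℕ) {x : κ →₀ M} (hx : x ∈ degreePart A M deg n) :
    embed A M j x ∈ degreePart A M (shamashDeg deg) (n + 2 * j) := by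
  refine (degreePart_le_iff (P := (degreePart A M (shamashDeg deg) _).comap _)).2 ?_ hx
  rintro c m rfl
  rw [Submodule.mem_comap, embed_single]
  exact single_mem_degreePart (by simp [shamashDeg]) m

theorem bottom_mem_degreePart {n : ℤ} {v : κ × ℕ →₀ M}
    (hv : v ∈ degreePart A M (shamashDeg deg) n) : bottom A M v ∈ degreePart A M deg n := by
  refine (Finsupp.mem_supported' A _).2 fun c hc => (Finsupp.mem_supported' A v).1 hv (c, 0) ?_
  simpa [shamashDeg] using hc

theorem raise_mem_degreePart {n : ℤ} {v : κ × ℕ →₀ M}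
    (hv : v ∈ degreePart A M (shamashDeg deg) n) :
    raise A M v ∈ degreePart A M (shamashDeg deg) (n + 2) := by
  refine (degreePart_le_iff (P := (degreePart A M (shamashDeg deg) _).comap _)).2 ?_ hv
  rintro c m rfl
  rw [Submodule.mem_comap, raise_single]
  refine single_mem_degreePart ?_ m
  simp only [shamashDeg]
  push_cast
  ring

theorem lower_mem_degreePart {n : ℤ} {v : κ × ℕ →₀ M}
    (hv : v ∈ degreePart A M (shamashDeg deg) n) :
    lower A M v ∈ degreePart A M (shamashDeg deg) (n - 2) := by
  refine (Finsupp.mem_supported' A _).2 fun c hc =>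
    (Finsupp.mem_supported' A v).1 hv (c.1, c.2 + 1) fun h => hc ?_
  have h' : (shamashDeg deg (c.1, c.2 + 1) : ℤ) = n := h
  simp only [shamashDeg, Set.mem_ofPred_eq] at h' ⊢
  push_cast at h' ⊢
  linarith

theorem embed_bottom_of_lower_eq_zero {w : κ × ℕ →₀ M} (hw : lower A M w = 0) :
    embed A M 0 (bottom A M w) = w := by
  simpa [hw] using embed_bottom_add_raise_lower (A := A) w

end DividedPowers

section Contraction

open Finset

variable {A κ : Type*} [CommRing A] {deg : κ → ℕ}

/-- The action of a power series in the dual variable on divided powers, by contraction: the `n`-th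
power lowers exponents by `n`, and kills the exponents less than `n`. -/
noncomputable def contraction (G : PowerSeries (Module.End A (κ →₀ A))) :
    Module.End A (κ × ℕ →₀ A) :=
  Finsupp.linearCombination A fun c =>
    ∑ p ∈ antidiagonal c.2, embed A A p.2 (PowerSeries.coeff p.1 G (.single c.1 1))

theorem contraction_embed (G : PowerSeries (Module.End A (κ →₀ A))) (j : ℕ) (x : κ →₀ A) :
    contraction G (embed A A j x) =
      ∑ p ∈ antidiagonal j, embed A A p.2 (PowerSeries.coeff p.1 G x) := by
  have : contraction G ∘ₗ embed A A j =
      ∑ p ∈ antidiagonal j, embed A A p.2 ∘ₗ PowerSeries.coeff p.1 G :=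
    Finsupp.lhom_ext' fun c => LinearMap.ext_ring (by simp [contraction, embed_single])
  simpa using LinearMap.congr_fun this x

theorem contraction_embed_zero (G : PowerSeries (Module.End A (κ →₀ A))) (x : κ →₀ A) :
    contraction G (embed A A 0 x) = embed A A 0 (PowerSeries.coeff 0 G x) := by
  simp [contraction_embed]

theorem contraction_mul (G H : PowerSeries (Module.End A (κ →₀ A))) :
    contraction (G * H) = contraction G * contraction H := by
  refine linearMap_ext_embed fun j x => ?_
  simp only [Module.End.mul_apply, contraction_embed, PowerSeries.coeff_mul, LinearMap.sum_apply,
    map_sum, sum_sigma']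
  refine sum_nbij' (fun ⟨p, q⟩ => ⟨(q.2, q.1 + p.2), (q.1, p.2)⟩)
    (fun ⟨p, q⟩ => ⟨(q.1 + p.1, q.2), (q.1, p.1)⟩) ?_ ?_ ?_ ?_ ?_ <;>
    rintro ⟨⟨a, b⟩, c, d⟩ h <;>
    simp only [mem_sigma, HasAntidiagonal.mem_antidiagonal] at h ⊢ <;>
    obtain ⟨rfl, rfl⟩ := h
  · exact ⟨by ring, trivial⟩
  · exact ⟨by ring, trivial⟩
  · rfl
  · rfl

theorem contraction_monomial_one (a : A) :
    contraction (PowerSeries.monomial 1 (algebraMap A (Module.End A (κ →₀ A)) a)) =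
      a • lower A A := by
  refine linearMap_ext_embed fun j x => ?_
  cases j with
  | zero => simp [contraction_embed, PowerSeries.coeff_monomial, lower_embed_zero]
  | succ j =>
    rw [contraction_embed, sum_eq_single_of_mem (1, j) (by simp [add_comm])]
    · simp [lower_embed_succ]
    · rintro ⟨n, i⟩ h hne
      rw [HasAntidiagonal.mem_antidiagonal] at h
      rw [PowerSeries.coeff_monomial, if_neg, LinearMap.zero_apply, map_zero]
      rintro rfl
      exact hne (by congr 1; omega)

theorem contraction_mem_homogeneousEnd {G : PowerSeries (Module.End A (κ →₀ A))}
    (hG : ∀ n : ℕ, PowerSeries.coeff n G ∈ homogeneousEnd A A deg (2 * n - 1)) :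
    contraction G ∈ homogeneousEnd A A (shamashDeg deg) (-1) := by
  refine mem_homogeneousEnd_iff_single_one.2 fun c => ?_
  rw [← embed_single (A := A), contraction_embed]
  refine Submodule.sum_mem _ fun p hp => ?_
  rw [HasAntidiagonal.mem_antidiagonal] at hp
  convert embed_mem_degreePart p.2 (hG p.1 _ _ (single_mem_degreePart rfl 1)) using 2
  simp only [shamashDeg, ← hp]
  push_cast
  ring

variable {K : Type*} [AddCommGroup K] [Module A K] {d : Module.End A (κ →₀ A)}
  {ε : (κ →₀ A) →ₗ[A] K} {s : PowerSeries (Module.End A (κ →₀ A))} {f : A}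

theorem contraction_contraction (hs : IsHomotopySystem deg d f s) (v : κ × ℕ →₀ A) :
    contraction s (contraction s v) = f • lower A A v := by
  rw [← Module.End.mul_apply, ← contraction_mul, hs.mul_self, contraction_monomial_one,
    LinearMap.smul_apply]

theorem exists_contraction_eq (hd : IsResolution deg d ε) (hs : IsHomotopySystem deg d f s)
    (hf : IsSMulRegular A f) {n : ℤ} (hn : 0 ≤ n) {v u : κ × ℕ →₀ A}
    (hv : v ∈ degreePart A A (shamashDeg deg) n) (hvu : contraction s v = f • u)
    (hε : n = 0 → ε (bottom A A v) = 0) :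
    ∃ y ∈ degreePart A A (shamashDeg deg) (n + 1), contraction s y = v := by
  have hu : u ∈ degreePart A A (shamashDeg deg) (n - 1) :=
    mem_degreePart_of_smul_mem hf (hvu ▸ contraction_mem_homogeneousEnd hs.homogeneous _ _ hv)
  have hYu : raise A A u ∈ degreePart A A (shamashDeg deg) (n + 1) := by
    convert raise_mem_degreePart hu using 2
    ring
  set w := v - contraction s (raise A A u) with hw
  have hw_mem : w ∈ degreePart A A (shamashDeg deg) n := by
    refine sub_mem hv ?_
    simpa using contraction_mem_homogeneousEnd hs.homogeneous _ _ hYu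
  have hw_cycle : contraction s w = 0 := by
    rw [hw, map_sub, contraction_contraction hs, lower_raise, hvu, sub_self]
  have hw_lower : lower A A w = 0 := (isSMulRegular_finsupp hf).right_eq_zero_of_smul <| by
    rw [← contraction_contraction hs, hw_cycle, map_zero]
  have hw_bottom := embed_bottom_of_lower_eq_zero hw_lower
  have hd_bottom : d (bottom A A w) = 0 := embed_injective (A := A) 0 <| by
    rw [← hs.coeff_zero, ← contraction_embed_zero, hw_bottom, hw_cycle, map_zero]
  have hε_bottom (h0 : n = 0) : ε (bottom A A w) = 0 := by
    have hu0 : u = 0 := eq_zero_of_mem_degreePart_of_neg (by omega) hu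
    rw [hw, hu0, map_zero, map_zero, sub_zero, hε h0]
  obtain ⟨x, hx, hdx⟩ := hd.exact n hn _ (bottom_mem_degreePart hw_mem) hd_bottom hε_bottom
  refine ⟨raise A A u + embed A A 0 x, add_mem hYu ?_, ?_⟩
  · simpa using embed_mem_degreePart 0 hx
  · rw [map_add, contraction_embed_zero, hs.coeff_zero, hdx, hw_bottom, hw, add_sub_cancel]

end Contraction

section Dilate

variable (A : Type*) {B M κ : Type*} [CommRing A] [CommRing B] [AddCommGroup M] [Module A M]
  [Module B M]

/-- The map `κ →₀ A → κ →₀ M` induced by the map `A → M` that sends `1` to `m`. -/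
noncomputable def dilate (m : M) : (κ →₀ A) →ₗ[A] (κ →₀ M) :=
  Finsupp.mapRange.linearMap (LinearMap.toSpanSingleton A M m)

variable {A}

theorem dilate_apply (m : M) (p : κ →₀ A) (c : κ) : dilate A m p c = p c • m := rfl

theorem dilate_single (m : M) (c : κ) (a : A) : dilate A m (.single c a) = .single c (a • m) :=
  Finsupp.mapRange_single (hf := map_zero _)

theorem dilate_mem_degreePart {deg : κ → ℕ} {n : ℤ} (m : M) {p : κ →₀ A}
    (hp : p ∈ degreePart A A deg n) :
    dilate A m p ∈ degreePart B M deg n :=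
  (Finsupp.mem_supported' B _).2 fun c hc => by
    rw [dilate_apply, (Finsupp.mem_supported' A p).1 hp c hc, zero_smul]

theorem dilate_eq_zero_of_mem_smul_top {J : Ideal A} {m : M} (hJ : ∀ a ∈ J, a • m = 0)
    {X : Module.End A (κ →₀ A)} (hX : X ∈ J • (⊤ : Submodule A (Module.End A (κ →₀ A))))
    (p : κ →₀ A) : dilate A m (X p) = 0 := by
  induction hX using Submodule.smul_induction_on' with
  | smul a ha Y _ =>
    ext c
    simp [dilate_apply, smul_comm a, hJ a ha]
  | add X _ Y _ hX hY => rw [LinearMap.add_apply, map_add, hX, hY, add_zero]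

theorem dilate_embed (m : M) (j : ℕ) (p : κ →₀ A) :
    dilate A m (embed A A j p) = embed B M j (dilate A m p) := by
  induction p using Finsupp.induction_linear with
  | zero => simp only [map_zero]
  | add p q hp hq => simp only [map_add, hp, hq]
  | single c a => simp only [embed_single, dilate_single]

end Dilate

section Scalars

variable (A B M : Type*) {κ : Type*} [CommRing A] [CommRing B] [Algebra A B] [AddCommGroup M]
  [Module A M] [Module B M] [IsScalarTower A B M]

open scoped Classical in
/-- The endomorphism of `κ →₀ M ≃ M ⊗[A] (κ →₀ A)` induced by an endomorphism `X` of `κ →₀ A`. It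
is linear over every `A`-algebra `B` that acts on `M`. -/
noncomputable def act (X : Module.End A (κ →₀ A)) : Module.End B (κ →₀ M) :=
  (finsuppScalarRight A B M κ).conj (AlgebraTensorModule.lTensor B M X)

variable {A M} {deg : κ → ℕ}

theorem dilate_dilate (m : M) (b : B) (p : κ →₀ A) :
    dilate B m (dilate A b p) = dilate A (b • m) p := by
  ext c
  simp only [dilate_apply, smul_assoc]

open scoped Classical in
theorem finsuppScalarRight_tmul (m : M) (p : κ →₀ A) :
    finsuppScalarRight A B M κ (m ⊗ₜ p) = dilate A m p := by
  ext c
  simp [dilate_apply]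

theorem act_dilate (X : Module.End A (κ →₀ A)) (m : M) (p : κ →₀ A) :
    act A B M X (dilate A m p) = dilate A m (X p) := by
  classical
  rw [← finsuppScalarRight_tmul B, ← finsuppScalarRight_tmul B]
  simp [act, LinearEquiv.conj_apply]

theorem act_single (X : Module.End A (κ →₀ A)) (m : M) (c : κ) :
    act A B M X (.single c m) = dilate A m (X (.single c 1)) := by
  rw [← act_dilate B, dilate_single, one_smul]

theorem act_act (X : Module.End A (κ →₀ A)) : act B B M (act A B B X) = act A B M X :=
  Finsupp.lhom_ext fun c m => by simp only [act_single, dilate_dilate, one_smul]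

theorem act_mem_homogeneousEnd {e : ℤ} {X : Module.End A (κ →₀ A)}
    (hX : X ∈ homogeneousEnd A A deg e) : act A B M X ∈ homogeneousEnd B M deg e := by
  refine mem_homogeneousEnd_iff_single.2 fun c m => ?_
  rw [act_single]
  exact dilate_mem_degreePart m (hX _ _ (single_mem_degreePart rfl 1))

section Surjective

variable {B} (hAB : Function.Surjective (algebraMap A B))
include hAB

theorem exists_dilate_one_eq {n : ℤ} {x : κ →₀ B} (hx : x ∈ degreePart B B deg n) :
    ∃ p ∈ degreePart A A deg n, dilate A (1 : B) p = x := by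
  choose a ha using hAB
  refine ⟨∑ c ∈ x.support, .single c (a (x c)), Submodule.sum_mem _ fun c hc =>
    single_mem_degreePart ((Finsupp.mem_supported B x).1 hx hc) _, ?_⟩
  simp only [map_sum, dilate_single, Algebra.smul_def, ha, mul_one]
  exact x.sum_single

variable {K : Type*} [AddCommGroup K] [Module A K] [Module B K] [IsScalarTower A B K]
  {X : Module.End A (κ →₀ A)} {ε : (κ →₀ A) →ₗ[A] K}

theorem isResolution_act (hX : X ∈ homogeneousEnd A A deg (-1))
    (hXX : ∀ p, dilate A (1 : B) (X (X p)) = 0)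
    (exact : ∀ n, 0 ≤ n → ∀ p ∈ degreePart A A deg n, dilate A (1 : B) (X p) = 0 →
      (n = 0 → ε p = 0) → ∃ q ∈ degreePart A A deg (n + 1), X q = p)
    (augmentation : ∀ q ∈ degreePart A A deg 1, ε (X q) = 0)
    (surjective : ∀ k, ∃ p ∈ degreePart A A deg 0, ε p = k) :
    IsResolution deg (act A B B X) (Finsupp.linearCombination B fun c => ε (.single c 1)) := by
  have ε_dilate (p : κ →₀ A) :
      (Finsupp.linearCombination B fun c => ε (.single c 1)) (dilate A (1 : B) p) = ε p := by
    induction p using Finsupp.induction_linear with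
    | zero => simp
    | add p q hp hq => simp only [map_add, hp, hq]
    | single c a =>
      rw [dilate_single, Finsupp.linearCombination_single, smul_assoc, one_smul, ← map_smul,
        Finsupp.smul_single, smul_eq_mul, mul_one]
  refine ⟨act_mem_homogeneousEnd B hX, ?_, fun n hn x hx hdx hεx => ?_, fun y hy => ?_,
    fun k => ?_⟩
  · refine Finsupp.lhom_ext' fun c => LinearMap.ext_ring ?_
    simp only [LinearMap.comp_apply, Finsupp.lsingle_apply, Module.End.mul_apply, act_single,
      act_dilate, hXX, LinearMap.zero_apply]
  · obtain ⟨p, hp, rfl⟩ := exists_dilate_one_eq hAB hx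
    rw [act_dilate] at hdx
    rw [ε_dilate] at hεx
    obtain ⟨q, hq, rfl⟩ := exact n hn p hp hdx hεx
    exact ⟨dilate A 1 q, dilate_mem_degreePart 1 hq, act_dilate B X 1 q⟩
  · obtain ⟨q, hq, rfl⟩ := exists_dilate_one_eq hAB hy
    rw [act_dilate, ε_dilate, augmentation q hq]
  · obtain ⟨p, hp, rfl⟩ := surjective k
    exact ⟨dilate A 1 p, dilate_mem_degreePart 1 hp, ε_dilate p⟩

end Surjective

end Scalars

section Quotient

variable {A B K κ : Type*} [CommRing A] [CommRing B] [Algebra A B] [AddCommGroup K] [Module A K]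
  [Module B K] [IsScalarTower A B K] {deg : κ → ℕ} {d : Module.End A (κ →₀ A)}
  {ε : (κ →₀ A) →ₗ[A] K} {s : PowerSeries (Module.End A (κ →₀ A))} {f : A}

theorem exists_eq_smul_of_dilate_one_eq_zero (hker : RingHom.ker (algebraMap A B) = Ideal.span {f})
    {p : κ →₀ A} (hp : dilate A (1 : B) p = 0) : ∃ u, p = f • u := by
  have hdvd (c : κ) : f ∣ p c := by
    rw [← Ideal.mem_span_singleton, ← hker, RingHom.mem_ker, Algebra.algebraMap_eq_smul_one,
      ← dilate_apply, hp, Finsupp.zero_apply]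
  choose u hu using hdvd
  refine ⟨∑ c ∈ p.support, .single c (u c), ?_⟩
  simp only [Finset.smul_sum, Finsupp.smul_single, smul_eq_mul, ← hu]
  exact p.sum_single.symm

theorem contraction_eq_embed_of_lower_eq_zero {v : κ × ℕ →₀ A} (hv : lower A A v = 0) :
    contraction s v = embed A A 0 (PowerSeries.coeff 0 s (bottom A A v)) := by
  rw [← contraction_embed_zero, embed_bottom_of_lower_eq_zero hv]

theorem IsResolution.contraction (hd : IsResolution deg d ε) (hs : IsHomotopySystem deg d f s)
    (hf : IsSMulRegular A f) (hAB : Function.Surjective (algebraMap A B))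
    (hker : RingHom.ker (algebraMap A B) = Ideal.span {f}) :
    IsResolution (shamashDeg deg) (act A B B (contraction s))
      (Finsupp.linearCombination B fun c => ε (bottom A A (.single c 1))) := by
  have hfB : f • (1 : B) = 0 := by
    rw [← Algebra.algebraMap_eq_smul_one, ← RingHom.mem_ker, hker]
    exact Ideal.mem_span_singleton_self f
  refine isResolution_act (ε := ε ∘ₗ bottom A A) hAB (contraction_mem_homogeneousEnd hs.homogeneous)
    (fun p => ?_) (fun n hn p hp hdp hεp => ?_) (fun q hq => ?_) fun k => ?_
  · ext c
    rw [contraction_contraction hs, map_smul, Finsupp.smul_apply, dilate_apply, smul_comm, hfB,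
      smul_zero, Finsupp.zero_apply]
  · obtain ⟨u, hu⟩ := exists_eq_smul_of_dilate_one_eq_zero hker hdp
    exact exists_contraction_eq hd hs hf hn hp hu hεp
  · have hq_lower : lower A A q = 0 :=
      eq_zero_of_mem_degreePart_of_neg (by omega) (lower_mem_degreePart hq)
    rw [contraction_eq_embed_of_lower_eq_zero hq_lower, hs.coeff_zero, LinearMap.comp_apply,
      bottom_embed_zero]
    exact hd.augmentation _ (bottom_mem_degreePart hq)
  · obtain ⟨x, hx, rfl⟩ := hd.surjective k
    exact ⟨embed A A 0 x, by simpa using embed_mem_degreePart 0 hx, by simp [bottom_embed_zero]⟩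

theorem IsResolution.baseChange_of_bijective (hd : IsResolution deg d ε)
    (hAB : Function.Bijective (algebraMap A B)) :
    IsResolution deg (act A B B d) (Finsupp.linearCombination B fun c => ε (.single c 1)) := by
  have d_sq (p : κ →₀ A) : d (d p) = 0 := LinearMap.congr_fun hd.sq_eq_zero p
  refine isResolution_act hAB.2 hd.homogeneous (fun p => by rw [d_sq, map_zero])
    (fun n hn p hp hdp hεp => hd.exact n hn p hp ?_ hεp) hd.augmentation hd.surjective
  ext c
  apply hAB.1
  rw [Algebra.algebraMap_eq_smul_one, ← dilate_apply, hdp, Finsupp.zero_apply, Finsupp.zero_apply,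
    map_zero]

end Quotient

section Splitting

variable {A B M κ : Type*} [CommRing A] [CommRing B] [Algebra A B] [AddCommGroup M] [Module A M]
  [Module B M] [IsScalarTower A B M] {deg : κ → ℕ} {s : PowerSeries (Module.End A (κ →₀ A))}
  {J : Ideal A}

theorem act_contraction_embed (hs : ∀ n ≠ 0, PowerSeries.coeff n s ∈
      J • (⊤ : Submodule A (Module.End A (κ →₀ A))))
    (hJ : ∀ a ∈ J, ∀ m : M, a • m = 0) (j : ℕ) (x : κ →₀ M) :
    act A B M (contraction s) (embed B M j x) =
      embed B M j (act A B M (PowerSeries.coeff 0 s) x) := by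
  refine LinearMap.congr_fun (f := act A B M (contraction s) ∘ₗ embed B M j)
    (g := embed B M j ∘ₗ act A B M (PowerSeries.coeff 0 s)) (Finsupp.lhom_ext fun c m => ?_) x
  rw [LinearMap.comp_apply, LinearMap.comp_apply, act_single, embed_single, act_single,
    ← embed_single (A := A), contraction_embed, map_sum,
    Finset.sum_eq_single_of_mem (0, j) (by simp)]
  · exact dilate_embed m j _
  · rintro ⟨n, i⟩ h hne
    rw [dilate_embed (B := B), dilate_eq_zero_of_mem_smul_top (fun a ha => hJ a ha m) (hs n ?_) _,
      map_zero]
    rintro rfl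
    obtain rfl : i = j := by simpa using h
    exact hne rfl

end Splitting

section Homology

variable {B M κ : Type*} [CommRing B] [AddCommGroup M] [Module B M]

/-- The cycles of degree `n` for a homogeneous differential `D` of degree `-1`. -/
noncomputable def cycles (D : Module.End B (κ →₀ M)) (deg : κ → ℕ) (n : ℤ) : Submodule B (κ →₀ M) :=
  LinearMap.ker D ⊓ degreePart B M deg n

theorem mem_cycles {D : Module.End B (κ →₀ M)} {deg : κ → ℕ} {n : ℤ} {z : κ →₀ M} :
    z ∈ cycles D deg n ↔ D z = 0 ∧ z ∈ degreePart B M deg n :=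
  Iff.rfl

/-- The homology in degree `n` of a homogeneous differential `D` of degree `-1`. -/
noncomputable abbrev Homology (D : Module.End B (κ →₀ M)) (deg : κ → ℕ) (n : ℤ) :=
  cycles D deg n ⧸ ((degreePart B M deg (n + 1)).map D).submoduleOf (cycles D deg n)

variable {D : Module.End B (κ →₀ M)} {deg : κ → ℕ}

theorem Homology.mk_eq_zero_iff {n : ℤ} {z : cycles D deg n} :
    (Submodule.Quotient.mk z : Homology D deg n) = 0 ↔
      ∃ y ∈ degreePart B M deg (n + 1), D y = z :=
  Submodule.Quotient.mk_eq_zero _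

theorem subsingleton_homology_of_neg {n : ℤ} (hn : n < 0) : Subsingleton (Homology D deg n) := by
  have : Subsingleton (cycles D deg n) := subsingleton_of_forall_eq 0 fun z =>
    Subtype.ext (eq_zero_of_mem_degreePart_of_neg hn z.2.2)
  infer_instance

theorem finite_homology [IsNoetherianRing B] [Module.Finite B M]
    (hdeg : ∀ n, {c | deg c = n}.Finite) (n : ℤ) : Module.Finite B (Homology D deg n) := by
  have hS : {c | (deg c : ℤ) = n}.Finite :=
    (hdeg n.toNat).subset fun c (hc : (deg c : ℤ) = n) => by
      rw [Set.mem_ofPred_eq]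
      omega
  have := hS.to_subtype
  have : Module.Finite B (degreePart B M deg n) :=
    Module.Finite.equiv (Finsupp.supportedEquivFinsupp {c | (deg c : ℤ) = n}).symm
  have : Module.Finite B (cycles D deg n) :=
    .of_injective (Submodule.inclusion inf_le_right) (Submodule.inclusion_injective _)
  infer_instance

variable {T : Module.End B (κ × ℕ →₀ M)} (hT : ∀ j x, T (embed B M j x) = embed B M j (D x))
include hT

theorem bottom_apply_of_embed (v : κ × ℕ →₀ M) : bottom B M (T v) = D (bottom B M v) := by
  refine LinearMap.congr_fun (f := bottom B M ∘ₗ T) (g := D ∘ₗ bottom B M)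
    (linearMap_ext_embed fun j x => ?_) v
  cases j <;> simp [hT, bottom_embed_zero, bottom_embed_succ]

theorem lower_apply_of_embed (v : κ × ℕ →₀ M) : lower B M (T v) = T (lower B M v) := by
  refine LinearMap.congr_fun (f := lower B M ∘ₗ T) (g := T ∘ₗ lower B M)
    (linearMap_ext_embed fun j x => ?_) v
  cases j <;> simp [hT, lower_embed_zero, lower_embed_succ]

theorem raise_apply_of_embed (v : κ × ℕ →₀ M) : raise B M (T v) = T (raise B M v) := by
  refine LinearMap.congr_fun (f := raise B M ∘ₗ T) (g := T ∘ₗ raise B M)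
    (linearMap_ext_embed fun j x => ?_) v
  simp [hT, raise_embed]

theorem bottom_mem_cycles {n : ℤ} {z : κ × ℕ →₀ M} (hz : z ∈ cycles T (shamashDeg deg) n) :
    bottom B M z ∈ cycles D deg n :=
  mem_cycles.2 ⟨by rw [← bottom_apply_of_embed hT, hz.1, map_zero],
    bottom_mem_degreePart hz.2⟩

theorem lower_mem_cycles {n : ℤ} {z : κ × ℕ →₀ M} (hz : z ∈ cycles T (shamashDeg deg) n) :
    lower B M z ∈ cycles T (shamashDeg deg) (n - 2) :=
  mem_cycles.2 ⟨by rw [← lower_apply_of_embed hT, hz.1, map_zero],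
    lower_mem_degreePart hz.2⟩

theorem embed_add_raise_mem_cycles {n : ℤ} {x : κ →₀ M} {w : κ × ℕ →₀ M} (hx : x ∈ cycles D deg n)
    (hw : w ∈ cycles T (shamashDeg deg) (n - 2)) :
    embed B M 0 x + raise B M w ∈ cycles T (shamashDeg deg) n := by
  refine mem_cycles.2 ⟨?_, add_mem ?_ ?_⟩
  · rw [map_add, hT, ← raise_apply_of_embed hT, hx.1, hw.1, map_zero, map_zero,
      add_zero]
  · simpa using embed_mem_degreePart 0 hx.2
  · simpa using raise_mem_degreePart hw.2

theorem exists_apply_eq_iff_of_embed {n : ℤ} {z : κ × ℕ →₀ M} :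
    (∃ y ∈ degreePart B M (shamashDeg deg) (n + 1), T y = z) ↔
      (∃ x ∈ degreePart B M deg (n + 1), D x = bottom B M z) ∧
        ∃ w ∈ degreePart B M (shamashDeg deg) (n - 2 + 1), T w = lower B M z := by
  constructor
  · rintro ⟨y, hy, rfl⟩
    exact ⟨⟨bottom B M y, bottom_mem_degreePart hy, (bottom_apply_of_embed hT y).symm⟩,
      lower B M y, sub_add_eq_add_sub n 2 1 ▸ lower_mem_degreePart hy,
      (lower_apply_of_embed hT y).symm⟩
  · rintro ⟨⟨x, hx, hxz⟩, w, hw, hwz⟩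
    refine ⟨embed B M 0 x + raise B M w, add_mem ?_ ?_, ?_⟩
    · simpa using embed_mem_degreePart 0 hx
    · convert raise_mem_degreePart hw using 2
      ring
    · rw [map_add, hT, ← raise_apply_of_embed hT, hxz, hwz, embed_bottom_add_raise_lower]

theorem nonempty_homology_equiv_prod (n : ℤ) :
    Nonempty (Homology T (shamashDeg deg) n ≃ₗ[B]
      Homology D deg n × Homology T (shamashDeg deg) (n - 2)) := by
  let φ : cycles T (shamashDeg deg) n →ₗ[B]
      Homology D deg n × Homology T (shamashDeg deg) (n - 2) :=
    (Submodule.mkQ _ ∘ₗ (bottom B M).restrict fun _ => bottom_mem_cycles hT).prod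
      (Submodule.mkQ _ ∘ₗ (lower B M).restrict fun _ => lower_mem_cycles hT)
  have hφ : LinearMap.ker φ = ((degreePart B M (shamashDeg deg) (n + 1)).map T).submoduleOf _ := by
    ext z
    refine Prod.ext_iff.trans ?_
    exact (and_congr Homology.mk_eq_zero_iff Homology.mk_eq_zero_iff).trans
      (exists_apply_eq_iff_of_embed hT).symm
  have φ_surjective : Function.Surjective φ := by
    rintro ⟨x, w⟩
    obtain ⟨x, rfl⟩ := Submodule.mkQ_surjective _ x
    obtain ⟨w, rfl⟩ := Submodule.mkQ_surjective _ w
    refine ⟨⟨_, embed_add_raise_mem_cycles hT x.2 w.2⟩, Prod.ext ?_ ?_⟩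
    · exact congrArg (Submodule.mkQ _) (Subtype.ext (by simp [bottom_embed_zero, bottom_raise]))
    · exact congrArg (Submodule.mkQ _) (Subtype.ext (by simp [lower_embed_zero, lower_raise]))
  exact ⟨(Submodule.quotEquivOfEq _ _ hφ.symm).trans (φ.quotKerEquivOfSurjective φ_surjective)⟩

end Homology

section ChainComplex

variable {A : Type u} {B M κ : Type*} [CommRing A] [CommRing B] [AddCommGroup M] [Module A M]
  [Module B M] [SMul A B] [IsScalarTower A B M] {D : Module.End B (κ →₀ M)} {deg : κ → ℕ}

theorem nonempty_homology_equiv (S : ShortComplex (ModuleCat.{u} A)) {H : Type*} [AddCommGroup H]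
    [Module A H] (φ : LinearMap.ker S.g.hom →ₗ[A] H) (φ_surjective : Function.Surjective φ)
    (hφ : ∀ z, φ z = 0 ↔ ∃ y, S.f y = z) : Nonempty (S.homology ≃ₗ[A] H) := by
  refine ⟨S.moduleCatHomologyIso.toLinearEquiv ≪≫ₗ Submodule.quotEquivOfEq _ _ ?_ ≪≫ₗ
    φ.quotKerEquivOfSurjective φ_surjective⟩
  ext z
  refine Iff.trans ?_ (hφ z).symm
  exact exists_congr fun y => Subtype.ext_iff

theorem nonempty_homology_equiv_of_injective (C : ChainComplex (ModuleCat.{u} A) ℕ)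
    (hD : D ∈ homogeneousEnd B M deg (-1)) (ψ : ∀ n : ℕ, C.X n →ₗ[A] (κ →₀ M))
    (ψ_injective : ∀ n, Function.Injective (ψ n))
    (ψ_mem : ∀ n : ℕ, ∀ x, ψ n x ∈ degreePart B M deg n)
    (exists_ψ_eq : ∀ n : ℕ, ∀ y ∈ degreePart B M deg n, ∃ x, ψ n x = y)
    (ψ_d : ∀ n x, ψ n (C.d (n + 1) n x) = D (ψ (n + 1) x)) (n : ℕ) :
    Nonempty (C.homology n ≃ₗ[A] Homology D deg n) := by
  obtain ⟨j, hj, ψ_d_next⟩ : ∃ j, (ComplexShape.down ℕ).next n = j ∧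
      ∀ x, ψ j (C.d n j x) = D (ψ n x) := by
    cases n with
    | succ n => exact ⟨n, by simp, ψ_d n⟩
    | zero =>
      refine ⟨0, by simp, fun x => ?_⟩
      rw [C.shape _ _ (by simp), eq_zero_of_mem_degreePart_of_neg (by simp) (hD _ _ (ψ_mem 0 x))]
      exact map_zero _
  have mem_ker (z : C.X n) : C.d n j z = 0 ↔ ψ n z ∈ cycles D deg n := by
    rw [mem_cycles, ← ψ_d_next, map_eq_zero_iff _ (ψ_injective j), and_iff_left (ψ_mem n z)]
  let φ : LinearMap.ker (C.d n j).hom →ₗ[A] cycles D deg n :=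
    ((ψ n).domRestrict _).codRestrict ((cycles D deg n).restrictScalars A)
      fun z => (mem_ker z).1 z.2
  let π : cycles D deg n →ₗ[B] Homology D deg n := Submodule.mkQ _
  obtain ⟨e⟩ := nonempty_homology_equiv (C.sc' (n + 1) n j) (π.restrictScalars A ∘ₗ φ) (by
      refine (Submodule.mkQ_surjective _).comp fun z => ?_
      obtain ⟨x, hx⟩ := exists_ψ_eq n z z.2.2
      exact ⟨⟨x, (mem_ker x).2 (hx ▸ z.2)⟩, Subtype.ext hx⟩) fun z => by
    refine Homology.mk_eq_zero_iff.trans ⟨?_, ?_⟩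
    · rintro ⟨y, hy, hyz⟩
      obtain ⟨x, rfl⟩ := exists_ψ_eq (n + 1) y (by exact_mod_cast hy)
      exact ⟨x, ψ_injective n ((ψ_d n x).trans hyz)⟩
    · rintro ⟨x, hx⟩
      exact ⟨ψ (n + 1) x, by exact_mod_cast ψ_mem (n + 1) x,
        (ψ_d n x).symm.trans (congrArg (ψ n) hx)⟩
  exact ⟨(ShortComplex.homologyMapIso (C.isoSc' (n + 1) n j (by simp) hj)).toLinearEquiv ≪≫ₗ e⟩

end ChainComplex

section Complex

variable {A K κ : Type u} [CommRing A] [AddCommGroup K] [Module A K] {deg : κ → ℕ}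
  {d : Module.End A (κ →₀ A)} {ε : (κ →₀ A) →ₗ[A] K}

instance free_degreePart (n : ℤ) : Module.Free A (degreePart A A deg n) :=
  .of_equiv (Finsupp.supportedEquivFinsupp {c | (deg c : ℤ) = n}).symm

namespace IsResolution

/-- The term of degree `n + 1` mapping to the term of degree `n`. -/
noncomputable def differential (hd : IsResolution deg d ε) (n : ℕ) :
    degreePart A A deg (n + 1 : ℕ) →ₗ[A] degreePart A A deg n :=
  d.restrict fun x hx => by simpa using hd.homogeneous _ _ hx

/-- The chain complex of free modules underlying a graded free resolution. -/
noncomputable def complex (hd : IsResolution deg d ε) : ChainComplex (ModuleCat.{u} A) ℕ :=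
  ChainComplex.of (fun n => ModuleCat.of A (degreePart A A deg n))
    (fun n => ModuleCat.ofHom (hd.differential n)) fun n => by
      ext1
      exact LinearMap.ext fun x => Subtype.ext (LinearMap.congr_fun hd.sq_eq_zero x.1)

theorem complex_d (hd : IsResolution deg d ε) (n : ℕ) :
    hd.complex.d (n + 1) n = ModuleCat.ofHom (hd.differential n) := by
  simp [complex]

theorem exactAt_complex_succ (hd : IsResolution deg d ε) (n : ℕ) :
    hd.complex.ExactAt (n + 1) := by
  rw [HomologicalComplex.exactAt_iff' _ (n + 1 + 1) (n + 1) n (by simp) (by simp),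
    ShortComplex.moduleCat_exact_iff]
  intro x hx
  change hd.complex.d (n + 1) n x = 0 at hx
  rw [complex_d] at hx
  obtain ⟨y, hy, hdy⟩ := hd.exact (n + 1 : ℕ) (by omega) x.1 x.2 (congrArg Subtype.val hx)
    fun h => by omega
  refine ⟨⟨y, by exact_mod_cast hy⟩, ?_⟩
  change hd.complex.d (n + 1 + 1) (n + 1) _ = x
  rw [complex_d]
  exact Subtype.ext hdy

/-- The resolution as a projective resolution in the category of modules. -/
noncomputable def projectiveResolution (hd : IsResolution deg d ε) :
    ProjectiveResolution (ModuleCat.of A K) where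
  complex := hd.complex
  projective n := (IsProjective.iff_projective (degreePart A A deg n)).1 inferInstance
  π := (ChainComplex.toSingle₀Equiv _ _).symm ⟨ModuleCat.ofHom (ε ∘ₗ Submodule.subtype _), by
    rw [complex_d]
    ext y
    exact hd.augmentation y.1 (by simpa using y.2)⟩
  quasiIso := ⟨fun n => by
    cases n with
    | zero =>
      rw [ChainComplex.quasiIsoAt₀_iff, ShortComplex.quasiIso_iff_of_zeros' _ rfl rfl rfl]
      refine ⟨(ShortComplex.moduleCat_exact_iff _).2 fun x hx => ?_,
        (ModuleCat.epi_iff_surjective _).2 fun k => ?_⟩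
      · obtain ⟨y, hy, hdy⟩ := hd.exact 0 le_rfl x.1 x.2
          (eq_zero_of_mem_degreePart_of_neg (by simp) (hd.homogeneous _ _ x.2)) fun _ => hx
        refine ⟨⟨y, hy⟩, ?_⟩
        change hd.complex.d 1 0 _ = x
        rw [complex_d]
        exact Subtype.ext hdy
      · obtain ⟨x, hx, rfl⟩ := hd.surjective k
        exact ⟨⟨x, hx⟩, rfl⟩
    | succ n =>
      rw [quasiIsoAt_iff_exactAt']
      · exact hd.exactAt_complex_succ n
      · apply ChainComplex.exactAt_succ_single_obj⟩

end IsResolution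

variable {B M : Type u} [CommRing B] [AddCommGroup M] [Module A M] [Module B M]

variable (M) in
open scoped Classical in
/-- The identification of the term of degree `n` of `M ⊗[A] (κ →₀ A)` with that of `κ →₀ M`. -/
noncomputable def tensorEmbed (n : ℤ) : M ⊗[A] degreePart A A deg n →ₗ[A] (κ →₀ M) :=
  (finsuppScalarRight A A M κ).toLinearMap ∘ₗ (degreePart A A deg n).subtype.lTensor M

theorem tensorEmbed_tmul {n : ℤ} (m : M) (p : degreePart A A deg n) :
    tensorEmbed M n (m ⊗ₜ p) = dilate A m (p : κ →₀ A) := by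
  simp [tensorEmbed, finsuppScalarRight_tmul]

theorem tensorEmbed_injective (n : ℤ) :
    Function.Injective (tensorEmbed M n : M ⊗[A] degreePart A A deg n → (κ →₀ M)) := by
  classical
  refine (finsuppScalarRight A A M κ).injective.comp ?_
  let r : (κ →₀ A) →ₗ[A] degreePart A A deg n := Finsupp.restrictDom A A {c | (deg c : ℤ) = n}
  have hr : r ∘ₗ (degreePart A A deg n).subtype = LinearMap.id :=
    Finsupp.restrictDom_comp_subtype _
  refine Function.LeftInverse.injective (g := r.lTensor M) fun x => ?_
  rw [← LinearMap.lTensor_comp_apply, hr, LinearMap.lTensor_id_apply]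

theorem tensorEmbed_mem_degreePart {n : ℤ} (x : M ⊗[A] degreePart A A deg n) :
    tensorEmbed M n x ∈ degreePart B M deg n := by
  induction x using TensorProduct.induction_on with
  | zero => rw [map_zero]; exact zero_mem _
  | tmul m p => rw [tensorEmbed_tmul]; exact dilate_mem_degreePart m p.2
  | add x y hx hy => rw [map_add]; exact add_mem hx hy

theorem exists_tensorEmbed_eq {n : ℤ} {y : κ →₀ M} (hy : y ∈ degreePart B M deg n) :
    ∃ x : M ⊗[A] degreePart A A deg n, tensorEmbed M n x = y := by
  refine (degreePart_le_iff (A := A) (P := LinearMap.range (tensorEmbed M n))).2 ?_ hy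
  rintro c m hc
  exact ⟨m ⊗ₜ ⟨_, single_mem_degreePart hc 1⟩, by rw [tensorEmbed_tmul, dilate_single, one_smul]⟩

variable [Algebra A B] [IsScalarTower A B M]

theorem IsResolution.tensorEmbed_differential (hd : IsResolution deg d ε) (n : ℕ)
    (x : M ⊗[A] degreePart A A deg (n + 1 : ℕ)) :
    tensorEmbed M n ((hd.differential n).lTensor M x) =
      act A B M d (tensorEmbed M (n + 1 : ℕ) x) := by
  induction x using TensorProduct.induction_on with
  | zero => simp only [map_zero]
  | tmul m p => rw [LinearMap.lTensor_tmul, tensorEmbed_tmul, tensorEmbed_tmul, act_dilate]; rfl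
  | add x y hx hy => simp only [map_add, hx, hy]

variable (B M) in
theorem IsResolution.nonempty_tor_equiv (hd : IsResolution deg d ε) (n : ℕ) :
    Nonempty (((Tor (ModuleCat A) n).obj (ModuleCat.of A M)).obj (ModuleCat.of A K) ≃ₗ[A]
      Homology (act A B M d) deg n) := by
  let F := (MonoidalCategory.tensoringLeft (ModuleCat A)).obj (ModuleCat.of A M)
  let C := (F.mapHomologicalComplex (ComplexShape.down ℕ)).obj hd.complex
  have C_d (n : ℕ) (x : M ⊗[A] degreePart A A deg (n + 1 : ℕ)) :
      tensorEmbed M n (C.d (n + 1) n x) = act A B M d (tensorEmbed M (n + 1 : ℕ) x) := by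
    rw [← hd.tensorEmbed_differential]
    change tensorEmbed M n ((hd.complex.d (n + 1) n).hom.lTensor M x) = _
    rw [complex_d]
    rfl
  obtain ⟨e⟩ := nonempty_homology_equiv_of_injective C (act_mem_homogeneousEnd B hd.homogeneous)
    (fun n => tensorEmbed M n) (fun n => tensorEmbed_injective n)
    (fun _ x => tensorEmbed_mem_degreePart x) (fun _ _ => exists_tensorEmbed_eq) C_d n
  exact ⟨(hd.projectiveResolution.isoLeftDerivedObj F n).toLinearEquiv ≪≫ₗ e⟩

end Complex

section FiniteFree

variable {A K : Type*} [CommRing A] [AddCommGroup K] [Module A K]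

theorem exists_range_eq [IsNoetherianRing A] [Module.Finite A K] (N : Submodule A K) :
    ∃ (r : ℕ) (φ : (Fin r →₀ A) →ₗ[A] K), LinearMap.range φ = N := by
  obtain ⟨r, φ, hφ⟩ := Module.Finite.exists_fin' A N
  refine ⟨r, N.subtype ∘ₗ φ ∘ₗ (Finsupp.linearEquivFunOnFinite A A (Fin r)).toLinearMap, ?_⟩
  rw [LinearMap.range_comp, LinearMap.range_comp, LinearEquiv.range, Submodule.map_top,
    LinearMap.range_eq_top.2 hφ, Submodule.map_top, Submodule.range_subtype]

variable (A K) in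
theorem exists_exact_sequence [IsNoetherianRing A] [Module.Finite A K] :
    ∃ (r : ℕ → ℕ) (φ : ∀ n, (Fin (r (n + 1)) →₀ A) →ₗ[A] (Fin (r n) →₀ A))
      (ε : (Fin (r 0) →₀ A) →ₗ[A] K), Function.Surjective ε ∧
        LinearMap.range (φ 0) = LinearMap.ker ε ∧
        ∀ n, LinearMap.range (φ (n + 1)) = LinearMap.ker (φ n) := by
  obtain ⟨r₀, ε, hε⟩ := exists_range_eq (⊤ : Submodule A K)
  choose r φ hφ using fun p : Σ r : ℕ, Submodule A (Fin r →₀ A) => exists_range_eq p.2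
  let syzygy : ℕ → Σ r : ℕ, Submodule A (Fin r →₀ A) :=
    Nat.rec ⟨r₀, LinearMap.ker ε⟩ fun _ p => ⟨r p, LinearMap.ker (φ p)⟩
  exact ⟨fun n => (syzygy n).1, fun n => φ (syzygy n), ε, LinearMap.range_eq_top.1 hε,
    hφ (syzygy 0), fun n => hφ (syzygy (n + 1))⟩

variable {ι : ℕ → Type*}

variable (A ι) in
/-- The inclusion of the summand of degree `n`. -/
noncomputable def degreeEmbed (n : ℕ) : (ι n →₀ A) →ₗ[A] ((Σ n, ι n) →₀ A) :=
  Finsupp.lmapDomain A A (Sigma.mk n)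

theorem degreeEmbed_single (n : ℕ) (i : ι n) (a : A) :
    degreeEmbed A ι n (.single i a) = .single ⟨n, i⟩ a := by
  simp [degreeEmbed]

theorem degreeEmbed_injective (n : ℕ) : Function.Injective (degreeEmbed A ι n) :=
  Finsupp.mapDomain_injective sigma_mk_injective

theorem range_degreeEmbed (n : ℕ) :
    LinearMap.range (degreeEmbed A ι n) = degreePart A A Sigma.fst n := by
  rw [LinearMap.range_eq_map, ← Finsupp.supported_univ, degreeEmbed, Finsupp.lmapDomain_supported,
    Set.image_univ, Set.range_sigmaMk]
  simp only [degreePart, Nat.cast_inj]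
  rfl

theorem mem_degreePart_fst_iff {n : ℕ} {x : (Σ n, ι n) →₀ A} :
    x ∈ degreePart A A Sigma.fst n ↔ ∃ y, degreeEmbed A ι n y = x := by
  rw [← range_degreeEmbed, LinearMap.mem_range]

/-- The differential on the direct sum of the terms `ι n →₀ A` of a sequence of linear maps. -/
noncomputable def totalDifferential (φ : ∀ n, (ι (n + 1) →₀ A) →ₗ[A] (ι n →₀ A)) :
    Module.End A ((Σ n, ι n) →₀ A) :=
  Finsupp.linearCombination A fun
    | ⟨0, _⟩ => 0
    | ⟨n + 1, i⟩ => degreeEmbed A ι n (φ n (.single i 1))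

/-- The extension by zero of an augmentation of the term of degree `0` to the direct sum. -/
noncomputable def totalAugmentation (ε : (ι 0 →₀ A) →ₗ[A] K) : ((Σ n, ι n) →₀ A) →ₗ[A] K :=
  Finsupp.linearCombination A fun
    | ⟨0, i⟩ => ε (.single i 1)
    | ⟨_ + 1, _⟩ => 0

variable {φ : ∀ n, (ι (n + 1) →₀ A) →ₗ[A] (ι n →₀ A)} {ε : (ι 0 →₀ A) →ₗ[A] K}

theorem totalDifferential_degreeEmbed_zero (x : ι 0 →₀ A) :
    totalDifferential φ (degreeEmbed A ι 0 x) = 0 := by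
  refine LinearMap.congr_fun (f := totalDifferential φ ∘ₗ degreeEmbed A ι 0) (g := 0) ?_ x
  ext
  simp [totalDifferential, degreeEmbed_single]

theorem totalDifferential_degreeEmbed_succ (n : ℕ) (x : ι (n + 1) →₀ A) :
    totalDifferential φ (degreeEmbed A ι (n + 1) x) = degreeEmbed A ι n (φ n x) := by
  refine LinearMap.congr_fun (f := totalDifferential φ ∘ₗ degreeEmbed A ι (n + 1))
    (g := degreeEmbed A ι n ∘ₗ φ n) ?_ x
  ext
  simp [totalDifferential, degreeEmbed_single]

theorem totalAugmentation_degreeEmbed (x : ι 0 →₀ A) :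
    totalAugmentation ε (degreeEmbed A ι 0 x) = ε x := by
  refine LinearMap.congr_fun (f := totalAugmentation ε ∘ₗ degreeEmbed A ι 0) (g := ε) ?_ x
  ext
  simp [totalAugmentation, degreeEmbed_single]

theorem isResolution_of_exact (ε_surjective : Function.Surjective ε)
    (range_zero : LinearMap.range (φ 0) = LinearMap.ker ε)
    (range_succ : ∀ n, LinearMap.range (φ (n + 1)) = LinearMap.ker (φ n)) :
    IsResolution Sigma.fst (totalDifferential φ) (totalAugmentation ε) where
  homogeneous := by
    refine mem_homogeneousEnd_iff_single_one.2 ?_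
    rintro ⟨_ | n, i⟩
    · simp only [← degreeEmbed_single, totalDifferential_degreeEmbed_zero, zero_mem]
    · simp only [← degreeEmbed_single, totalDifferential_degreeEmbed_succ]
      simpa using mem_degreePart_fst_iff.2 ⟨_, rfl⟩
  sq_eq_zero := by
    have φ_φ (n : ℕ) (x : ι (n + 2) →₀ A) : φ n (φ (n + 1) x) = 0 :=
      LinearMap.mem_ker.1 (range_succ n ▸ ⟨x, rfl⟩)
    refine Finsupp.lhom_ext' fun ⟨n, i⟩ => LinearMap.ext_ring ?_
    rcases n with _ | _ | n <;>
      simp [← degreeEmbed_single, totalDifferential_degreeEmbed_zero,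
        totalDifferential_degreeEmbed_succ, φ_φ]
  exact := by
    intro n hn x hx hdx hεx
    lift n to ℕ using hn
    obtain ⟨x, rfl⟩ := mem_degreePart_fst_iff.1 hx
    obtain ⟨y, rfl⟩ : x ∈ LinearMap.range (φ n) := by
      cases n with
      | zero => rw [range_zero, LinearMap.mem_ker, ← totalAugmentation_degreeEmbed, hεx rfl]
      | succ n =>
        rwa [totalDifferential_degreeEmbed_succ, map_eq_zero_iff _ (degreeEmbed_injective n),
          ← LinearMap.mem_ker, ← range_succ] at hdx
    exact ⟨_, by exact_mod_cast mem_degreePart_fst_iff.2 ⟨y, rfl⟩,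
      totalDifferential_degreeEmbed_succ n y⟩
  augmentation := by
    intro y hy
    obtain ⟨y, rfl⟩ : ∃ x, degreeEmbed A ι 1 x = y :=
      mem_degreePart_fst_iff.1 (by exact_mod_cast hy)
    rw [totalDifferential_degreeEmbed_succ, totalAugmentation_degreeEmbed, ← LinearMap.mem_ker,
      ← range_zero]
    exact ⟨y, rfl⟩
  surjective := by
    intro k
    obtain ⟨x, rfl⟩ := ε_surjective k
    exact ⟨_, by exact_mod_cast mem_degreePart_fst_iff.2 ⟨x, rfl⟩, totalAugmentation_degreeEmbed x⟩

variable (A K) in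
theorem exists_isResolution [IsNoetherianRing A] [Module.Finite A K] :
    ∃ (r : ℕ → ℕ) (d : Module.End A ((Σ n, Fin (r n)) →₀ A)) (ε : ((Σ n, Fin (r n)) →₀ A) →ₗ[A] K),
      IsResolution Sigma.fst d ε := by
  obtain ⟨r, φ, ε, hε, hφ_zero, hφ_succ⟩ := exists_exact_sequence A K
  exact ⟨r, _, _, isResolution_of_exact hε hφ_zero hφ_succ⟩

end FiniteFree

open IsLocalRing

section ResidueRank

variable (A : Type*) {H : Type*} [CommRing A] [IsLocalRing A] [AddCommGroup H] [Module A H]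

variable (H) in
/-- The dimension of the reduction of `H` to the residue field of `A`. -/
noncomputable def residueRank : ℕ :=
  Module.finrank (ResidueField A) (ResidueField A ⊗[A] H)

variable {H' : Type*} [AddCommGroup H'] [Module A H']

variable {A} in
theorem residueRank_congr (e : H ≃ₗ[A] H') : residueRank A H = residueRank A H' :=
  (e.baseChange A (ResidueField A) H H').finrank_eq

variable (H H') in
theorem residueRank_prod [Module.Finite A H] [Module.Finite A H'] :
    residueRank A (H × H') = residueRank A H + residueRank A H' := by
  rw [residueRank, (TensorProduct.prodRight A (ResidueField A) (ResidueField A) H H').finrank_eq,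
    Module.finrank_prod]
  rfl

variable (H) in
theorem residueRank_of_subsingleton [Subsingleton H] : residueRank A H = 0 :=
  Module.finrank_zero_of_subsingleton

variable {A} {B : Type*} [CommRing B] [IsLocalRing B] [Algebra A B]
  (hAB : Function.Surjective (algebraMap A B))
include hAB

theorem bijective_algebraMap_residueField [IsLocalHom (algebraMap A B)] :
    Function.Bijective (algebraMap (ResidueField A) (ResidueField B)) := by
  refine ⟨(algebraMap (ResidueField A) (ResidueField B)).injective, fun y => ?_⟩
  obtain ⟨b, rfl⟩ := residue_surjective y
  obtain ⟨a, rfl⟩ := hAB b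
  exact ⟨residue A a, ResidueField.map_residue _ a⟩

theorem nonempty_residueField_equiv : Nonempty (ResidueField A ≃ₗ[A] ResidueField B) := by
  have := IsLocalHom.of_surjective (algebraMap A B) hAB
  exact ⟨.ofBijective (IsScalarTower.toAlgHom A (ResidueField A) (ResidueField B)).toLinearMap
    (bijective_algebraMap_residueField hAB)⟩

variable (H) in
theorem residueRank_eq_of_surjective [Module B H] [IsScalarTower A B H] :
    residueRank A H = residueRank B H := by
  have := IsLocalHom.of_surjective (algebraMap A B) hAB
  have := TensorProduct.CompatibleSMul.of_algebraMap_surjective (ResidueField B) H hAB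
  let e : ResidueField A ≃ₗ[ResidueField A] ResidueField B :=
    .ofBijective (Algebra.linearMap _ _) (bijective_algebraMap_residueField hAB)
  calc
    _ = Module.finrank (ResidueField A) (ResidueField B ⊗[A] H) :=
      (TensorProduct.AlgebraTensorModule.congr e (LinearEquiv.refl A H)).finrank_eq
    _ = Module.finrank (ResidueField B) (ResidueField B ⊗[A] H) := by
      rw [← Module.finrank_mul_finrank (ResidueField A) (ResidueField B), ← e.finrank_eq,
        Module.finrank_self, one_mul]
    _ = _ := (TensorProduct.equivOfCompatibleSMul A B (ResidueField B) (ResidueField B)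
        H).finrank_eq.symm

end ResidueRank

section PoincareSeries

/-- The Poincaré series of a module over a local ring. Its coefficients are taken in `ℤ`, so that
the factor `1 - X ^ 2` is available. -/
noncomputable def poincareSeries (A : Type) [CommRing A] [IsLocalRing A] (M : Type) [AddCommGroup M]
    [Module A M] : PowerSeries ℤ :=
  .mk fun n => (bettiNumber A M n : ℤ)

theorem mk_eq_one_sub_X_sq_mul_mk {a b : ℤ → ℤ} (hb : ∀ n < 0, b n = 0)
    (hab : ∀ n, b n = a n + b (n - 2)) :
    PowerSeries.mk (fun n : ℕ => a n) = (1 - PowerSeries.X ^ 2) * .mk fun n : ℕ => b n := by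
  ext n
  rw [sub_mul, one_mul, map_sub, PowerSeries.coeff_X_pow_mul', PowerSeries.coeff_mk,
    PowerSeries.coeff_mk, hab n]
  split_ifs with hn
  · rw [PowerSeries.coeff_mk, Nat.cast_sub hn, Nat.cast_ofNat, add_sub_cancel_right]
  · rw [hb _ (by omega), add_zero, sub_zero]

variable {A M : Type} [CommRing A] [IsLocalRing A] [AddCommGroup M] [Module A M]

theorem bettiNumber_congr {N : Type} [AddCommGroup N] [Module A N] (e : M ≃ₗ[A] N) (n : ℕ) :
    bettiNumber A M n = bettiNumber A N n :=
  residueRank_congr (((Tor (ModuleCat A) n).mapIso e.toModuleIso).app _).toLinearEquiv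

theorem poincareSeries_congr {N : Type} [AddCommGroup N] [Module A N] (e : M ≃ₗ[A] N) :
    poincareSeries A M = poincareSeries A N :=
  PowerSeries.ext fun n => by
    simp only [poincareSeries, PowerSeries.coeff_mk, bettiNumber_congr e]

theorem coeff_poincareSeries_mul {B N : Type} [CommRing B] [IsLocalRing B] [AddCommGroup N]
    [Module B N] (n : ℕ) :
    PowerSeries.coeff n (poincareSeries A M * poincareSeries B N) =
      (∑ p ∈ Finset.range (n + 1), bettiNumber A M p * bettiNumber B N (n - p) : ℕ) := by
  rw [PowerSeries.coeff_mul, Finset.Nat.sum_antidiagonal_eq_sum_range_succ_mk]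
  simp only [poincareSeries, PowerSeries.coeff_mk, Nat.cast_sum, Nat.cast_mul]

variable {B K κ : Type} [CommRing B] [IsLocalRing B] [Algebra A B] [Module B M]
  [IsScalarTower A B M] [AddCommGroup K] [Module A K] {deg : κ → ℕ} {d : Module.End A (κ →₀ A)}
  {ε : (κ →₀ A) →ₗ[A] K}

theorem IsResolution.bettiNumber_eq (hd : IsResolution deg d ε) (e : ResidueField A ≃ₗ[A] K)
    (hAB : Function.Surjective (algebraMap A B)) (n : ℕ) :
    bettiNumber A M n = residueRank B (Homology (act A B M d) deg n) := by
  obtain ⟨e'⟩ := hd.nonempty_tor_equiv B M n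
  rw [← residueRank_eq_of_surjective _ hAB]
  exact residueRank_congr
    ((((Tor (ModuleCat A) n).obj (.of A M)).mapIso e.toModuleIso).toLinearEquiv ≪≫ₗ e')

variable (M) in
theorem poincareSeries_of_subsingleton [IsNoetherianRing A] [Subsingleton M] :
    poincareSeries A M = 0 := by
  obtain ⟨r, d, ε, hd⟩ := exists_isResolution A (ResidueField A)
  ext n
  rw [poincareSeries, PowerSeries.coeff_mk, map_zero,
    hd.bettiNumber_eq (B := A) (.refl _ _) Function.surjective_id]
  exact_mod_cast residueRank_of_subsingleton A _

theorem finite_shamashDeg (hdeg : ∀ n, {c | deg c = n}.Finite) (n : ℕ) :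
    {c | shamashDeg deg c = n}.Finite := by
  refine (((Set.finite_le_nat n).biUnion fun m _ => hdeg m).prod (Set.finite_le_nat n)).subset ?_
  rintro ⟨c, j⟩ rfl
  simp only [shamashDeg, Set.mem_ofPred_eq, Set.mem_prod, Set.mem_iUnion, exists_prop,
    exists_eq_right', le_add_iff_nonneg_right, zero_le, true_and]
  omega

variable (hAB : Function.Surjective (algebraMap A B))
include hAB

theorem smul_residueField_eq_zero {a : A} (ha : a ∈ maximalIdeal A) (x : ResidueField B) :
    a • x = 0 := by
  have := IsLocalHom.of_surjective (algebraMap A B) hAB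
  obtain ⟨b, rfl⟩ := residue_surjective x
  rw [← algebraMap_smul B, Algebra.smul_def, ResidueField.algebraMap_eq,
    (residue_eq_zero_iff _).2 (map_maximalIdeal_le _ (Ideal.mem_map_of_mem _ ha)), zero_mul]

variable (M) [IsNoetherianRing A]

theorem poincareSeries_eq_of_bijective (hAB' : Function.Injective (algebraMap A B)) :
    poincareSeries A M = poincareSeries B M := by
  obtain ⟨e⟩ := nonempty_residueField_equiv hAB
  have : Module.Finite A (ResidueField B) := .of_surjective e.toLinearMap e.surjective
  obtain ⟨r, d, ε, hd⟩ := exists_isResolution A (ResidueField B)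
  ext n
  simp only [poincareSeries, PowerSeries.coeff_mk]
  rw [hd.bettiNumber_eq e hAB, (hd.baseChange_of_bijective ⟨hAB', hAB⟩).bettiNumber_eq (.refl _ _)
    Function.surjective_id, act_act]

variable [Module.Finite A M]

theorem poincareSeries_eq_of_ker_eq_span_singleton {f : A} (hf : IsSMulRegular A f)
    (hker : RingHom.ker (algebraMap A B) = Ideal.span {f})
    (hfM : f ∈ maximalIdeal A * Module.annihilator A M) :
    poincareSeries A M = (1 - PowerSeries.X ^ 2) * poincareSeries B M := by
  obtain ⟨e⟩ := nonempty_residueField_equiv hAB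
  have : Module.Finite A (ResidueField B) := .of_surjective e.toLinearMap e.surjective
  have : IsNoetherianRing B := isNoetherianRing_of_surjective A B _ hAB
  have : Module.Finite B M := .of_restrictScalars_finite A B M
  obtain ⟨r, d, ε, hd⟩ := exists_isResolution A (ResidueField B)
  obtain ⟨s, hs, hsJ⟩ := hd.exists_isHomotopySystem
    (fun a ha => smul_residueField_eq_zero hAB ha) (mul_comm (maximalIdeal A) _ ▸ hfM)
  let D := act A B M d
  let T := act A B M (contraction s)
  have hT (j x) : T (embed B M j x) = embed B M j (D x) := by
    rw [act_contraction_embed hsJ fun a ha => Module.mem_annihilator.1 ha, hs.coeff_zero]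
  have hdeg (n : ℕ) : {c : Σ n, Fin (r n) | c.1 = n}.Finite :=
    (Set.finite_range (Sigma.mk n)).subset (Set.range_sigmaMk n).ge
  have bettiNumber_A (n : ℕ) : bettiNumber A M n = residueRank B (Homology D Sigma.fst n) :=
    hd.bettiNumber_eq e hAB n
  have bettiNumber_B (n : ℕ) :
      bettiNumber B M n = residueRank B (Homology T (shamashDeg Sigma.fst) n) := by
    rw [(hd.contraction hs hf hAB hker).bettiNumber_eq (.refl _ _) Function.surjective_id, act_act]
  simp only [poincareSeries, bettiNumber_A, bettiNumber_B]
  refine mk_eq_one_sub_X_sq_mul_mk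
    (a := fun n => residueRank B (Homology D Sigma.fst n))
    (b := fun n => residueRank B (Homology T (shamashDeg Sigma.fst) n))
    (fun n hn => ?_) fun n => ?_
  · have := subsingleton_homology_of_neg (D := T) (deg := shamashDeg Sigma.fst) hn
    exact_mod_cast residueRank_of_subsingleton B _
  · have := finite_homology (D := D) hdeg n
    have := finite_homology (D := T) (finite_shamashDeg hdeg) (n - 2)
    obtain ⟨e⟩ := nonempty_homology_equiv_prod (deg := Sigma.fst) hT n
    exact_mod_cast (residueRank_congr e).trans (residueRank_prod B _ _)

end PoincareSeries

section RegularSequence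

theorem ker_quotient_lift_eq_span {A B : Type*} [CommRing A] [Semiring B] {J : Ideal A} {f : A}
    {g : A →+* B} (hg : RingHom.ker g = J ⊔ Ideal.span {f}) (hJ : ∀ a ∈ J, g a = 0) :
    RingHom.ker (Ideal.Quotient.lift J g hJ) = Ideal.span {Ideal.Quotient.mk J f} := by
  refine (Ideal.ker_quotient_lift g hJ).trans ?_
  rw [hg, Ideal.map_sup, Ideal.map_quotient_self, bot_sup_eq,
    Ideal.map_span, Set.image_singleton]

theorem isSMulRegular_mk_of_isWeaklyRegular_append {A : Type*} [CommRing A] {fs : List A} {f : A}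
    (h : RingTheory.Sequence.IsWeaklyRegular A (fs ++ [f])) :
    IsSMulRegular (A ⧸ Ideal.ofList fs) (Ideal.Quotient.mk (Ideal.ofList fs) f) := by
  rw [RingTheory.Sequence.isWeaklyRegular_append_iff,
    RingTheory.Sequence.isWeaklyRegular_singleton_iff, smul_eq_mul, Ideal.mul_top] at h
  exact h.2

variable {A C M : Type*} [CommRing A] [IsLocalRing A] [CommRing C] [IsLocalRing C] [Algebra A C]
  [AddCommGroup M] [Module A M] [Module C M] [IsScalarTower A C M]

theorem algebraMap_mem_maximalIdeal_mul_annihilator (hAC : Function.Surjective (algebraMap A C))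
    {a : A} (ha : a ∈ maximalIdeal A * Module.annihilator A M) :
    algebraMap A C a ∈ maximalIdeal C * Module.annihilator C M := by
  have := IsLocalHom.of_surjective (algebraMap A C) hAC
  have h := Ideal.mem_map_of_mem (algebraMap A C) ha
  rw [Ideal.map_mul] at h
  refine Ideal.mul_mono (map_maximalIdeal_le _) (Ideal.map_le_iff_le_comap.2 ?_) h
  rw [Module.comap_annihilator]

end RegularSequence

theorem poincareSeries_eq_of_isWeaklyRegular {A M : Type} [CommRing A] [IsLocalRing A]
    [IsNoetherianRing A] [AddCommGroup M] [Module A M] [Module.Finite A M] (fs : List A) :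
    ∀ {B : Type} [CommRing B] [IsLocalRing B] [Algebra A B] [Module B M] [IsScalarTower A B M],
      Function.Surjective (algebraMap A B) → RingHom.ker (algebraMap A B) = Ideal.ofList fs →
      RingTheory.Sequence.IsWeaklyRegular A fs →
      Ideal.ofList fs ≤ maximalIdeal A * Module.annihilator A M →
      poincareSeries A M = (1 - PowerSeries.X ^ 2) ^ fs.length * poincareSeries B M := by
  induction fs using List.reverseRecOn with
  | nil =>
    intro B _ _ _ _ _ hAB hker _ _
    rw [List.length_nil, pow_zero, one_mul]
    exact poincareSeries_eq_of_bijective M hAB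
      ((RingHom.injective_iff_ker_eq_bot _).2 (hker.trans Ideal.ofList_nil))
  | append_singleton fs f ih =>
    intro B _ _ _ _ _ hAB hker hreg hann
    rw [Ideal.ofList_append, Ideal.ofList_singleton] at hker hann
    let J := Ideal.ofList fs
    let C := A ⧸ J
    let : Algebra C B := (Ideal.Quotient.lift J (algebraMap A B) fun a ha =>
      RingHom.mem_ker.1 (hker ▸ Ideal.mem_sup_left ha)).toAlgebra
    have hAC : Function.Surjective (algebraMap A C) := Ideal.Quotient.mk_surjective
    have hCB : Function.Surjective (algebraMap C B) :=
      .of_comp (g := algebraMap A C) hAB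
    let : Module C M := Module.compHom M (algebraMap C B)
    have : IsScalarTower C B M := .of_algebraMap_smul fun _ _ => rfl
    have : IsScalarTower A C M := .of_algebraMap_smul fun a m => algebraMap_smul B a m
    have := RingHom.domain_nontrivial (algebraMap C B)
    have : IsLocalRing C := .of_surjective' _ hAC
    have : Module.Finite C M := .of_restrictScalars_finite A C M
    have ker_CB : RingHom.ker (algebraMap C B) = Ideal.span {Ideal.Quotient.mk J f} :=
      ker_quotient_lift_eq_span hker _
    have hfC : Ideal.Quotient.mk J f ∈ maximalIdeal C * Module.annihilator C M :=
      algebraMap_mem_maximalIdeal_mul_annihilator hAC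
        (hann (Ideal.mem_sup_right (Ideal.mem_span_singleton_self f)))
    calc
      _ = (1 - PowerSeries.X ^ 2) ^ fs.length * poincareSeries C M :=
        ih hAC Ideal.mk_ker ((RingTheory.Sequence.isWeaklyRegular_append_iff A _ _).1 hreg).1
          (le_sup_left.trans hann)
      _ = _ := by
        rw [poincareSeries_eq_of_ker_eq_span_singleton M hCB
          (isSMulRegular_mk_of_isWeaklyRegular_append hreg) ker_CB hfC, List.length_append,
          List.length_singleton, pow_succ _ fs.length, mul_assoc]

theorem poincareSeries_mul_eq {A B M : Type} [CommRing A] [IsLocalRing A] [IsNoetherianRing A]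
    [CommRing B] [IsLocalRing B] [Algebra A B] [AddCommGroup M] [Module A M]
    [Module B M] [IsScalarTower A B M] [Module.Finite A M] {fs : List A}
    (hAB : Function.Surjective (algebraMap A B))
    (hker : RingHom.ker (algebraMap A B) = Ideal.ofList fs)
    (hreg : RingTheory.Sequence.IsWeaklyRegular A fs)
    (hann : Ideal.ofList fs ≤ maximalIdeal A * Module.annihilator A M) :
    poincareSeries B M * poincareSeries A (ResidueField A) =
      poincareSeries A M * poincareSeries B (ResidueField B) := by
  obtain hM | hM := subsingleton_or_nontrivial M
  · have := isNoetherianRing_of_surjective A B _ hAB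
    rw [poincareSeries_of_subsingleton M, poincareSeries_of_subsingleton M, zero_mul, zero_mul]
  obtain ⟨e⟩ := nonempty_residueField_equiv hAB
  have : Module.Finite A (ResidueField B) := .of_surjective e.toLinearMap e.surjective
  have ann_M_ne_top : Module.annihilator A M ≠ ⊤ := by
    rwa [Ne, Module.annihilator_eq_top_iff, not_subsingleton_iff_nontrivial]
  have ann_M_le : Module.annihilator A M ≤ Module.annihilator A (ResidueField B) :=
    (le_maximalIdeal ann_M_ne_top).trans
      fun a ha => Module.mem_annihilator.2 (smul_residueField_eq_zero hAB ha)
  rw [poincareSeries_congr e, poincareSeries_eq_of_isWeaklyRegular fs hAB hker hreg hann,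
    poincareSeries_eq_of_isWeaklyRegular fs hAB hker hreg
      (hann.trans (Ideal.mul_mono_right ann_M_le))]
  ring

end Shamash

/-- **Inertness for complete intersections (Shamash).** If `f₁, …, fₙ` is a
`Q`-regular sequence contained in the maximal ideal `m` of a Noetherian local
ring `Q`, `I = (f₁, …, fₙ)`, `R = Q/I`, and `M` is a finitely generated
`R`-module with `I ⊆ m·ann_Q(M)`, then `M` is inert by `Q → R`:
`∑_{p+q=i} β_p^R(M)·β_q^Q(k) = ∑_{p+q=i} β_p^Q(M)·β_q^R(k)` for all `i ≥ 0`. -/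
theorem inert_of_regular_sequence_of_ann
    (Q : Type) [CommRing Q] [IsNoetherianRing Q] [IsLocalRing Q]
    (n : ℕ) (f : Fin n → Q)
    (hreg : RingTheory.Sequence.IsRegular Q (List.ofFn f))
    (hfm : ∀ j, f j ∈ IsLocalRing.maximalIdeal Q)
    (I : Ideal Q) (hI : I = Ideal.span (Set.range f))
    [IsLocalRing (Q ⧸ I)]
    (M : Type) [AddCommGroup M] [Module Q M] [Module (Q ⧸ I) M]
    [IsScalarTower Q (Q ⧸ I) M] [Module.Finite (Q ⧸ I) M]
    (hann : I ≤ IsLocalRing.maximalIdeal Q * Module.annihilator Q M)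
    (i : ℕ) :
    ∑ p ∈ Finset.range (i + 1),
        bettiNumber (Q ⧸ I) M p * bettiNumber Q (IsLocalRing.ResidueField Q) (i - p) =
      ∑ p ∈ Finset.range (i + 1),
        bettiNumber Q M p *
          bettiNumber (Q ⧸ I) (IsLocalRing.ResidueField (Q ⧸ I)) (i - p) := by
  have : Module.Finite Q M := .trans (Q ⧸ I) M
  have hfI : Ideal.ofList (List.ofFn f) = I := by
    rw [hI, Ideal.ofList]
    exact congrArg Ideal.span (Set.ext fun _ => List.mem_ofFn)
  have h := Shamash.poincareSeries_mul_eq (A := Q) (B := Q ⧸ I) (M := M)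
    Ideal.Quotient.mk_surjective (Ideal.mk_ker.trans hfI.symm) hreg.toIsWeaklyRegular
    (hfI.trans_le hann)
  have h_coeff := congrArg (PowerSeries.coeff i) h
  rwa [Shamash.coeff_poincareSeries_mul, Shamash.coeff_poincareSeries_mul, Nat.cast_inj] at h_coeff
end
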